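/- arXiv:1602.02971 — 4 statements merged into one kernel-verified Lean document; each statement's English description precedes it below -/
import Mathlib

section
/- Let μ be a strictly non-degenerate, finitely supported probability measure on F̃ (Thompson's group F realized as a group of piecewise linear homeomorphisms of ℝ). Then the random walk (F̃, μ) is not Liouville: there exists a bounded, non-constant μ-harmonic function f : F̃ → ℝ. -/
noncomputable section

/-- The generator `Ã : γ ↦ γ - 1` as a permutation of `ℝ`. -/
def Atil : Equiv.Perm ℝ := Equiv.subRight (1 : ℝ)

/-- The underlying function of the generator `B̃`. -/
def Bfun : ℝ → ℝ := fun x => if x ≤ 0 then x else if x ≤ 2 then x / 2 else x - 1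

/-- The underlying function of `B̃⁻¹`. -/
def Binvfun : ℝ → ℝ := fun x => if x ≤ 0 then x else if x ≤ 1 then 2 * x else x + 1

/-- The generator `B̃` as a permutation of `ℝ`. -/
def Btil : Equiv.Perm ℝ where
  toFun := Bfun
  invFun := Binvfun
  left_inv := by
    intro x
    simp only [Bfun, Binvfun]
    split_ifs <;> linarith
  right_inv := by
    intro x
    simp only [Bfun, Binvfun]
    split_ifs <;> linarith

/-- Thompson's group `F` realized as the subgroup `F̃` of piecewise-linear homeomorphisms of `ℝ`
generated by `Ã` and `B̃`.  The multiplication of `Equiv.Perm ℝ` is `(f * g) x = f (g x)`;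
the paper's group operation is `(g₁ g₂)(γ) = g₂(g₁(γ))`, i.e. the paper's product `g₁·g₂`
corresponds to `g₂ * g₁` here.  As a *set* of permutations, `F̃` is the same for either
convention. -/
def Ftil : Subgroup (Equiv.Perm ℝ) := Subgroup.closure {Atil, Btil}

/-- If `f` vanishes wherever `u` vanishes, finite support of `u` gives summability. -/
theorem summ_of {u f : ℝ → ℝ} (hu : (Function.support u).Finite) (h : ∀ y, u y = 0 → f y = 0) :
    Summable f := by
  apply summable_of_hasFiniteSupport
  refine hu.subset ?_
  intro y hy hy0
  exact hy (h y hy0)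

theorem supp_comp {u : ℝ → ℝ} (hu : (Function.support u).Finite) (e : Equiv.Perm ℝ) :
    (Function.support (fun y => u (e y))).Finite := by
  have : (Function.support (fun y => u (e y))) = e ⁻¹' (Function.support u) := rfl
  rw [this]
  exact hu.preimage e.injective.injOn

theorem summ_sq {u : ℝ → ℝ} (hu : (Function.support u).Finite) :
    Summable (fun y => u y ^ 2) := summ_of hu (fun y h => by simp [h])

theorem summ_diff {u : ℝ → ℝ} (hu : (Function.support u).Finite) (e : Equiv.Perm ℝ) :
    Summable (fun y => (u y - u (e y)) ^ 2) := by
  apply summable_of_hasFiniteSupport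
  refine (hu.union (supp_comp hu e)).subset ?_
  intro y hy
  by_contra hc
  simp only [Set.mem_union, Function.mem_support, not_or, not_not] at hc
  apply hy
  simp [hc.1, hc.2]

/-- Energy along one permutation. -/
def DD (e : Equiv.Perm ℝ) (u : ℝ → ℝ) : ℝ := ∑' y, (u y - u (e y)) ^ 2

theorem DD_nonneg (e : Equiv.Perm ℝ) (u : ℝ → ℝ) : 0 ≤ DD e u :=
  tsum_nonneg (fun _ => sq_nonneg _)

theorem DD_mul (e e' : Equiv.Perm ℝ) {u : ℝ → ℝ} (hu : (Function.support u).Finite) :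
    DD (e * e') u ≤ 2 * DD e u + 2 * DD e' u := by
  have h1 : DD e u = ∑' y, (u (e' y) - u (e (e' y))) ^ 2 :=
    (Equiv.tsum_eq e' (fun y => (u y - u (e y)) ^ 2)).symm
  have s1 : Summable (fun y => (u (e' y) - u (e (e' y))) ^ 2) :=
    (Equiv.summable_iff e' (f := fun y => (u y - u (e y)) ^ 2)).2 (summ_diff hu e)
  rw [h1]
  unfold DD
  rw [← tsum_mul_left, ← tsum_mul_left,
    ← (s1.mul_left 2).tsum_add ((summ_diff hu e').mul_left 2)]
  refine (summ_diff hu (e * e')).tsum_le_tsum ?_ ((s1.mul_left 2).add ((summ_diff hu e').mul_left 2))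
  intro y
  simp only [Equiv.Perm.mul_apply]
  nlinarith [sq_nonneg ((u (e' y) - u (e (e' y))) - (u y - u (e' y)))]

theorem inner_DD (e : Equiv.Perm ℝ) {u : ℝ → ℝ} (hu : (Function.support u).Finite) :
    ∑' y, u y * (u y - u (e y)) = DD e u / 2 := by
  have hc := supp_comp hu e
  have s0 := summ_sq hu
  have s1 := summ_sq hc
  have sd := summ_diff hu e
  have h1 : ∑' y, u (e y) ^ 2 = ∑' y, u y ^ 2 := Equiv.tsum_eq e (fun y => u y ^ 2)
  have : ∀ y, u y * (u y - u (e y)) = (1/2) * ((u y - u (e y)) ^ 2 + (u y ^ 2 - u (e y) ^ 2)) := by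
    intro y; ring
  simp_rw [this]
  rw [tsum_mul_left, sd.tsum_add (s0.sub s1), s0.tsum_sub s1, h1]
  unfold DD
  ring

/-- The second tree map, `y ↦ y/2 + 1` on `[0,2]`. -/
def Rtil : Equiv.Perm ℝ := Atil⁻¹ * Btil

theorem Atil_apply (y : ℝ) : Atil y = y - 1 := rfl
theorem Atil_inv_apply (y : ℝ) : Atil⁻¹ y = y + 1 := rfl
theorem Btil_apply (y : ℝ) (h0 : 0 ≤ y) (h2 : y ≤ 2) : Btil y = y / 2 := by
  change Bfun y = _
  unfold Bfun
  split_ifs <;> linarith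
theorem Rtil_apply (y : ℝ) (h0 : 0 ≤ y) (h2 : y ≤ 2) : Rtil y = y / 2 + 1 := by
  change Atil⁻¹ (Btil y) = _
  rw [Btil_apply y h0 h2, Atil_inv_apply]

open Classical in
theorem interval_ineq {u : ℝ → ℝ} (hu : (Function.support u).Finite) :
    ∑' y, (if 0 < y ∧ y < 2 then u y ^ 2 else 0) ≤ 6 * (DD Btil u + DD Rtil u) := by
  set w : ℝ → ℝ := fun y => if 0 < y ∧ y < 2 then u y ^ 2 else 0 with hw
  set w1 : ℝ → ℝ := fun y => if 0 < y ∧ y < 1 then u y ^ 2 else 0 with hw1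
  set w2 : ℝ → ℝ := fun y => if 1 < y ∧ y < 2 then u y ^ 2 else 0 with hw2
  have sw : Summable w := summ_of hu (fun y h => by simp [hw, h])
  have sw1 : Summable w1 := summ_of hu (fun y h => by simp [hw1, h])
  have sw2 : Summable w2 := summ_of hu (fun y h => by simp [hw2, h])
  have sb1 : Summable (fun y => w1 (Btil y)) := (Equiv.summable_iff Btil (f := w1)).2 sw1
  have sb2 : Summable (fun y => w2 (Rtil y)) := (Equiv.summable_iff Rtil (f := w2)).2 sw2
  have e1 : ∑' y, w1 (Btil y) = ∑' y, w1 y := Equiv.tsum_eq Btil w1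
  have e2 : ∑' y, w2 (Rtil y) = ∑' y, w2 y := Equiv.tsum_eq Rtil w2
  have n1 : ∀ y, 0 ≤ w1 y := fun y => by simp only [hw1]; split_ifs <;> positivity
  have n2 : ∀ y, 0 ≤ w2 y := fun y => by simp only [hw2]; split_ifs <;> positivity
  have h12 : ∑' y, w1 y + ∑' y, w2 y ≤ ∑' y, w y := by
    rw [← sw1.tsum_add sw2]
    refine (sw1.add sw2).tsum_le_tsum ?_ sw
    intro y
    have := sq_nonneg (u y)
    simp only [hw, hw1, hw2]
    split_ifs with a b c c b c c
    all_goals first | linarith | (exfalso; grind)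
  have key : ∑' y, w y ≤ 3/4 * (∑' y, w1 (Btil y) + ∑' y, w2 (Rtil y))
      + 3/2 * (DD Btil u + DD Rtil u) := by
    unfold DD
    rw [← sb1.tsum_add sb2, ← (summ_diff hu Btil).tsum_add (summ_diff hu Rtil),
      ← tsum_mul_left, ← tsum_mul_left,
      ← ((sb1.add sb2).mul_left _).tsum_add
        (((summ_diff hu Btil).add (summ_diff hu Rtil)).mul_left _)]
    refine sw.tsum_le_tsum ?_ (((sb1.add sb2).mul_left _).add
        (((summ_diff hu Btil).add (summ_diff hu Rtil)).mul_left _))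
    intro y
    by_cases hy : 0 < y ∧ y < 2
    · have a1 : w1 (Btil y) = u (Btil y) ^ 2 := by
        have : 0 < Btil y ∧ Btil y < 1 := by
          rw [Btil_apply y hy.1.le hy.2.le]; constructor <;> linarith [hy.1, hy.2]
        simp only [hw1, if_pos this]
      have a2 : w2 (Rtil y) = u (Rtil y) ^ 2 := by
        have : 1 < Rtil y ∧ Rtil y < 2 := by
          rw [Rtil_apply y hy.1.le hy.2.le]; constructor <;> linarith [hy.1, hy.2]
        simp only [hw2, if_pos this]
      rw [a1, a2]
      simp only [hw, if_pos hy]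
      generalize u (Btil y) = a
      generalize u (Rtil y) = b
      generalize u y = t
      nlinarith [sq_nonneg (a - b), sq_nonneg (3 * (a + b) - 4 * t), sq_nonneg (a + b - t),
        sq_nonneg (a + b - 2 * t), sq_nonneg (3 * (a + b) / 2 - 2 * t)]
    · have := n1 (Btil y)
      have := n2 (Rtil y)
      simp only [hw, if_neg hy]
      positivity
  rw [e1, e2] at key
  linarith

/-- Points where `e` or its inverse fails to be differentiable. -/
def KK (e : Equiv.Perm ℝ) : Set ℝ :=
  {y | ¬ (DifferentiableAt ℝ e y ∧ DifferentiableAt ℝ (e⁻¹ : Equiv.Perm ℝ) (e y))}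

theorem KK_mul (e e' : Equiv.Perm ℝ) : KK (e * e') ⊆ KK e' ∪ e' ⁻¹' KK e := by
  intro y hy
  by_contra hc
  simp only [KK, Set.mem_union, Set.mem_ofPred_eq, Set.mem_preimage, not_or, not_not] at hc
  apply hy
  obtain ⟨⟨h1, h2⟩, h3, h4⟩ := hc
  refine ⟨?_, ?_⟩
  · exact DifferentiableAt.comp (g := e) (f := e') y h3 h1
  · rw [mul_inv_rev]
    refine DifferentiableAt.comp (g := (e'⁻¹ : Equiv.Perm ℝ)) (f := (e⁻¹ : Equiv.Perm ℝ)) _ ?_ h4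
    simpa using h2

theorem KK_inv (e : Equiv.Perm ℝ) : KK e⁻¹ ⊆ (e⁻¹ : Equiv.Perm ℝ) ⁻¹' KK e := by
  intro y hy hc
  apply hy
  obtain ⟨h1, h2⟩ := hc
  refine ⟨by simpa using h2, by simpa using h1⟩

theorem KK_Atil : KK Atil = ∅ := by
  ext y
  simp only [KK, Set.mem_ofPred_eq, Set.mem_empty_iff_false, iff_false, not_not]
  constructor
  · change DifferentiableAt ℝ (fun x : ℝ => x - 1) y
    fun_prop
  · change DifferentiableAt ℝ (fun x : ℝ => x + 1) _
    fun_prop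

theorem KK_Btil : KK Btil ⊆ {0, 2} := by
  intro y hy
  by_contra hc
  simp only [Set.mem_insert_iff, Set.mem_singleton_iff, not_or] at hc
  apply hy
  obtain ⟨h0, h2⟩ := hc
  change DifferentiableAt ℝ Bfun y ∧ DifferentiableAt ℝ Binvfun (Bfun y)
  rcases lt_or_gt_of_ne h0 with h | h
  · constructor
    · refine DifferentiableAt.congr_of_eventuallyEq (f := fun x => x) (by fun_prop) ?_
      filter_upwards [gt_mem_nhds h] with x hx
      unfold Bfun; split_ifs <;> linarith
    · have : Bfun y < 0 := by unfold Bfun; split_ifs <;> linarith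
      refine DifferentiableAt.congr_of_eventuallyEq (f := fun x => x) (by fun_prop) ?_
      filter_upwards [gt_mem_nhds this] with x hx
      unfold Binvfun; split_ifs <;> linarith
  rcases lt_or_gt_of_ne h2 with h' | h'
  · constructor
    · refine DifferentiableAt.congr_of_eventuallyEq (f := fun x => x / 2) (by fun_prop) ?_
      filter_upwards [gt_mem_nhds h', lt_mem_nhds h] with x hx hx'
      unfold Bfun; split_ifs <;> linarith
    · have a : Bfun y < 1 := by unfold Bfun; split_ifs <;> linarith
      have b : 0 < Bfun y := by unfold Bfun; split_ifs <;> linarith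
      refine DifferentiableAt.congr_of_eventuallyEq (f := fun x => 2 * x) (by fun_prop) ?_
      filter_upwards [gt_mem_nhds a, lt_mem_nhds b] with x hx hx'
      unfold Binvfun; split_ifs <;> linarith
  · constructor
    · refine DifferentiableAt.congr_of_eventuallyEq (f := fun x => x - 1) (by fun_prop) ?_
      filter_upwards [lt_mem_nhds h'] with x hx
      unfold Bfun; split_ifs <;> linarith
    · have : 1 < Bfun y := by unfold Bfun; split_ifs <;> linarith
      refine DifferentiableAt.congr_of_eventuallyEq (f := fun x => x + 1) (by fun_prop) ?_
      filter_upwards [lt_mem_nhds this] with x hx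
      unfold Binvfun; split_ifs <;> linarith

theorem KK_finite (e : Equiv.Perm ℝ) (he : e ∈ Ftil) : (KK e).Finite := by
  unfold Ftil at he
  induction he using Subgroup.closure_induction with
  | mem x hx =>
    rcases hx with rfl | rfl
    · rw [KK_Atil]; exact Set.finite_empty
    · exact (Set.toFinite {0, 2}).subset KK_Btil
  | one =>
    refine Set.finite_empty.subset ?_
    intro y hy
    apply hy
    constructor
    · change DifferentiableAt ℝ (fun x : ℝ => x) y
      fun_prop
    · change DifferentiableAt ℝ (fun x : ℝ => x) y
      fun_prop
  | mul x y _ _ hx hy =>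
    exact (hy.union (hx.preimage y.injective.injOn)).subset (KK_mul x y)
  | inv x _ hx =>
    exact (hx.preimage (Equiv.injective _).injOn).subset (KK_inv x)

theorem Btil_not_diff : ¬ DifferentiableAt ℝ Btil 0 := by
  intro h
  have hd := h.hasDerivAt
  have h1 : HasDerivWithinAt Btil 1 (Set.Iic 0) 0 := by
    refine (hasDerivWithinAt_id (0:ℝ) (Set.Iic 0)).congr ?_ ?_
    · intro x hx
      change Bfun x = x
      simp only [Set.mem_Iic] at hx
      simp [Bfun, hx]
    · change Bfun 0 = 0
      simp [Bfun]
  have h2 : HasDerivWithinAt Btil (1/2) (Set.Icc 0 2) 0 := by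
    refine ((hasDerivWithinAt_id (0:ℝ) (Set.Icc 0 2)).div_const 2).congr ?_ ?_
    · intro x hx
      rw [Btil_apply x hx.1 hx.2]; rfl
    · rw [Btil_apply 0 (by norm_num) (by norm_num)]; rfl
  have u1 := (uniqueDiffOn_Iic (0:ℝ) 0 (by simp)).eq_deriv _ h1 hd.hasDerivWithinAt
  have u2 := (uniqueDiffOn_Icc (show (0:ℝ) < 2 by norm_num) 0 (by simp)).eq_deriv _ h2
    hd.hasDerivWithinAt
  linarith

theorem Atil_mem : Atil ∈ Ftil := Subgroup.subset_closure (by simp)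
theorem Btil_mem : Btil ∈ Ftil := Subgroup.subset_closure (by simp)
theorem Rtil_mem : Rtil ∈ Ftil := Ftil.mul_mem (Ftil.inv_mem Atil_mem) Btil_mem

/-- Smooth transport of `0` to `2^{-k}`. -/
theorem transport (k : ℕ) : ∃ e ∈ Ftil, e 0 = (1/2 : ℝ) ^ k ∧ (0:ℝ) ∉ KK e := by
  induction k with
  | zero =>
    refine ⟨Atil⁻¹, Ftil.inv_mem Atil_mem, by rw [Atil_inv_apply]; norm_num, ?_⟩
    intro h
    have := KK_inv _ h
    rw [KK_Atil] at this
    exact this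
  | succ k ih =>
    obtain ⟨e, he, h0, hk⟩ := ih
    have p0 : 0 < (1/2 : ℝ) ^ k := by positivity
    have p1 : (1/2 : ℝ) ^ k ≤ 1 := pow_le_one₀ (by norm_num) (by norm_num)
    refine ⟨Btil * e, Ftil.mul_mem Btil_mem he, ?_, ?_⟩
    · rw [Equiv.Perm.mul_apply, h0, Btil_apply _ p0.le (by linarith), pow_succ]; ring
    · intro h
      rcases KK_mul _ _ h with h | h
      · exact hk h
      · have := KK_Btil h
        rw [h0] at this
        rcases this with h | h
        · linarith
        · simp only [Set.mem_singleton_iff] at h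
          linarith

theorem to_interval (x : ℝ) : ∃ e ∈ Ftil, 0 < e x ∧ e x < 2 := by
  have hz : ∀ (n : ℤ) (y : ℝ), (Atil ^ n : Equiv.Perm ℝ) y = y - n := by
    intro n
    induction n using Int.induction_on with
    | zero => intro y; simp
    | succ i ih =>
      intro y
      rw [zpow_add_one, Equiv.Perm.mul_apply, ih, Atil_apply]; push_cast; ring
    | pred i ih =>
      intro y
      rw [zpow_sub_one, Equiv.Perm.mul_apply, ih, Atil_inv_apply]; push_cast; ring
  refine ⟨Atil ^ (⌊x⌋ - 1), Ftil.zpow_mem Atil_mem _, ?_, ?_⟩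
  · rw [hz]; push_cast; linarith [Int.floor_le x]
  · rw [hz]; push_cast; linarith [Int.lt_floor_add_one x]

/-- Markov operator on functions on the line. -/
def QQ (H : Finset ↥Ftil) (m : ↥Ftil → ℝ) (u : ℝ → ℝ) : ℝ → ℝ :=
  fun y => ∑ h ∈ H, m h * u (h.1 y)

/-- Total energy. -/
def EE (H : Finset ↥Ftil) (m : ↥Ftil → ℝ) (u : ℝ → ℝ) : ℝ := ∑ h ∈ H, m h * DD h.1 u

theorem QQ_supp (H : Finset ↥Ftil) (m : ↥Ftil → ℝ) {u : ℝ → ℝ}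
    (hu : (Function.support u).Finite) : (Function.support (QQ H m u)).Finite := by
  have : (⋃ h ∈ H, Function.support (fun y => u (h.1 y))).Finite :=
    Set.Finite.biUnion H.finite_toSet (fun h _ => supp_comp hu h.1)
  refine this.subset ?_
  intro y hy
  by_contra hc
  simp only [Set.mem_iUnion, Function.mem_support, not_exists, not_not] at hc
  apply hy
  unfold QQ
  exact Finset.sum_eq_zero (fun h hh => by rw [hc h hh, mul_zero])

theorem EE_nonneg {H : Finset ↥Ftil} {m : ↥Ftil → ℝ} (hm : ∀ h ∈ H, 0 < m h) (u : ℝ → ℝ) :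
    0 ≤ EE H m u := Finset.sum_nonneg (fun h hh => mul_nonneg (hm h hh).le (DD_nonneg _ _))

theorem compare {H : Finset ↥Ftil} {m : ↥Ftil → ℝ} (hm : ∀ h ∈ H, 0 < m h)
    (hgen : Subsemigroup.closure (H : Set ↥Ftil) = ⊤) (g : ↥Ftil) :
    ∃ C : ℝ, 0 ≤ C ∧ ∀ u : ℝ → ℝ, (Function.support u).Finite → DD g.1 u ≤ C * EE H m u := by
  have hg : g ∈ Subsemigroup.closure (H : Set ↥Ftil) := by rw [hgen]; trivial
  induction hg using Subsemigroup.closure_induction with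
  | mem x hx =>
    have hx : x ∈ H := hx
    refine ⟨1 / m x, (by have := hm x hx; positivity), fun u _ => ?_⟩
    have h1 : m x * DD x.1 u ≤ EE H m u :=
      Finset.single_le_sum (f := fun h => m h * DD h.1 u)
        (fun h hh => mul_nonneg (hm h hh).le (DD_nonneg _ _)) hx
    rw [one_div, ← div_eq_inv_mul, le_div_iff₀ (hm x hx)]
    linarith
  | mul x y _ _ hx hy =>
    obtain ⟨C1, p1, h1⟩ := hx
    obtain ⟨C2, p2, h2⟩ := hy
    refine ⟨2 * C1 + 2 * C2, by positivity, fun u hu => ?_⟩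
    have := DD_mul x.1 y.1 hu
    have a := h1 u hu
    have b := h2 u hu
    change DD (x.1 * y.1) u ≤ _
    linarith

open Classical in
theorem interval_bound {H : Finset ↥Ftil} {m : ↥Ftil → ℝ} (hm : ∀ h ∈ H, 0 < m h)
    (hgen : Subsemigroup.closure (H : Set ↥Ftil) = ⊤) :
    ∃ C : ℝ, 0 ≤ C ∧ ∀ u : ℝ → ℝ, (Function.support u).Finite → ∀ T : Finset ℝ,
      (∀ y ∈ T, 0 < y ∧ y < 2) → ∑ y ∈ T, u y ^ 2 ≤ C * EE H m u := by
  obtain ⟨C1, p1, h1⟩ := compare hm hgen ⟨Btil, Btil_mem⟩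
  obtain ⟨C2, p2, h2⟩ := compare hm hgen ⟨Rtil, Rtil_mem⟩
  refine ⟨6 * (C1 + C2), by positivity, fun u hu T hT => ?_⟩
  have a := h1 u hu
  have b := h2 u hu
  have c := interval_ineq hu
  have sw : Summable (fun y => if 0 < y ∧ y < 2 then u y ^ 2 else 0) :=
    summ_of hu (fun y h => by simp [h])
  have d := sw.sum_le_tsum T (fun y _ => by split_ifs <;> positivity)
  have e : ∑ y ∈ T, (if 0 < y ∧ y < 2 then u y ^ 2 else 0) = ∑ y ∈ T, u y ^ 2 :=
    Finset.sum_congr rfl (fun y hy => if_pos (hT y hy))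
  rw [e] at d
  dsimp only at a b
  linarith

theorem point_bound {H : Finset ↥Ftil} {m : ↥Ftil → ℝ} (hm : ∀ h ∈ H, 0 < m h)
    (hgen : Subsemigroup.closure (H : Set ↥Ftil) = ⊤) (x : ℝ) :
    ∃ C : ℝ, 0 ≤ C ∧ ∀ u : ℝ → ℝ, (Function.support u).Finite → u x ^ 2 ≤ C * EE H m u := by
  obtain ⟨C1, p1, h1⟩ := interval_bound hm hgen
  obtain ⟨e, he, hx⟩ := to_interval x
  obtain ⟨C2, p2, h2⟩ := compare hm hgen ⟨e, he⟩
  refine ⟨2 * C1 + 2 * C2, by positivity, fun u hu => ?_⟩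
  have a := h1 u hu {e x} (by simpa using hx)
  have b := h2 u hu
  have c : (u x - u (e x)) ^ 2 ≤ DD e u :=
    (summ_diff hu e).le_tsum x (fun y _ => sq_nonneg _)
  rw [Finset.sum_singleton] at a
  dsimp only at b
  nlinarith [sq_nonneg (u x - 2 * u (e x))]

theorem inner_EE {H : Finset ↥Ftil} {m : ↥Ftil → ℝ} (hs : ∑ h ∈ H, m h = 1) {u : ℝ → ℝ}
    (hu : (Function.support u).Finite) :
    ∑' y, u y * (u y - QQ H m u y) = EE H m u / 2 := by
  have h1 : ∀ y, u y * (u y - QQ H m u y) = ∑ h ∈ H, m h * (u y * (u y - u (h.1 y))) := by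
    intro y
    have : u y = ∑ h ∈ H, m h * u y := by rw [← Finset.sum_mul, hs, one_mul]
    have h2 : u y - QQ H m u y = ∑ h ∈ H, m h * (u y - u (h.1 y)) := by
      simp only [mul_sub, Finset.sum_sub_distrib, QQ]
      rw [← this]
    rw [h2, Finset.mul_sum]
    exact Finset.sum_congr rfl (fun h _ => by ring)
  simp_rw [h1]
  rw [Summable.tsum_finsetSum]
  · unfold EE
    rw [Finset.sum_div]
    refine Finset.sum_congr rfl (fun h _ => ?_)
    rw [tsum_mul_left, inner_DD _ hu]
    ring
  · intro h _
    exact summ_of hu (fun y hy => by simp [hy])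

/-- Truncated Green function of the finite set `K`. -/
def GG (H : Finset ↥Ftil) (m : ↥Ftil → ℝ) (K : Finset ℝ) : ℕ → ℝ → ℝ
  | 0 => fun _ => 0
  | n + 1 => fun y => Set.indicator (K : Set ℝ) (fun _ => (1:ℝ)) y + QQ H m (GG H m K n) y

theorem QQ_mono {H : Finset ↥Ftil} {m : ↥Ftil → ℝ} (hm : ∀ h ∈ H, 0 < m h) {u v : ℝ → ℝ}
    (h : ∀ y, u y ≤ v y) (y : ℝ) : QQ H m u y ≤ QQ H m v y :=
  Finset.sum_le_sum (fun k hk => mul_le_mul_of_nonneg_left (h _) (hm k hk).le)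

theorem GG_supp (H : Finset ↥Ftil) (m : ↥Ftil → ℝ) (K : Finset ℝ) (n : ℕ) :
    (Function.support (GG H m K n)).Finite := by
  induction n with
  | zero => simp [GG]
  | succ n ih =>
    refine (K.finite_toSet.union (QQ_supp H m ih)).subset ?_
    intro y hy
    by_contra hc
    simp only [Set.mem_union, not_or, Function.mem_support, not_not] at hc
    apply hy
    simp only [GG]
    rw [Set.indicator_of_notMem hc.1, hc.2, add_zero]

theorem GG_mono {H : Finset ↥Ftil} {m : ↥Ftil → ℝ} (hm : ∀ h ∈ H, 0 < m h) (K : Finset ℝ)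
    (n : ℕ) : ∀ y, GG H m K n y ≤ GG H m K (n + 1) y := by
  induction n with
  | zero =>
    intro y
    simp only [GG, QQ, mul_zero, Finset.sum_const_zero, add_zero]
    exact Set.indicator_nonneg (fun _ _ => zero_le_one) y
  | succ n ih =>
    intro y
    have := QQ_mono hm ih y
    change _ + QQ H m (GG H m K n) y ≤ _ + QQ H m (GG H m K (n + 1)) y
    linarith

theorem GG_nonneg {H : Finset ↥Ftil} {m : ↥Ftil → ℝ} (hm : ∀ h ∈ H, 0 < m h) (K : Finset ℝ)
    (n : ℕ) (y : ℝ) : 0 ≤ GG H m K n y := by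
  have : Monotone (fun n => GG H m K n y) := monotone_nat_of_le_succ (fun n => GG_mono hm K n y)
  exact this (Nat.zero_le n)

theorem GG_energy {H : Finset ↥Ftil} {m : ↥Ftil → ℝ} (hm : ∀ h ∈ H, 0 < m h)
    (hs : ∑ h ∈ H, m h = 1) (K : Finset ℝ) (n : ℕ) :
    EE H m (GG H m K n) ≤ 2 * ∑ y ∈ K, GG H m K n y := by
  set u := GG H m K n with hu
  have hsu : (Function.support u).Finite := GG_supp H m K n
  have h1 := inner_EE hs hsu
  have h2 : ∑' y, u y * (u y - QQ H m u y)
      ≤ ∑' y, u y * Set.indicator (K : Set ℝ) (fun _ => (1:ℝ)) y := by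
    refine (summ_of hsu (fun y hy => by simp [hy])).tsum_le_tsum ?_
      (summ_of hsu (fun y hy => by simp [hy]))
    intro y
    refine mul_le_mul_of_nonneg_left ?_ (GG_nonneg hm K n y)
    have a := GG_mono hm K n y
    have b : GG H m K (n + 1) y
      = Set.indicator (K : Set ℝ) (fun _ => (1:ℝ)) y + QQ H m u y := rfl
    rw [b] at a
    linarith
  have h3 : ∑' y, u y * Set.indicator (K : Set ℝ) (fun _ => (1:ℝ)) y = ∑ y ∈ K, u y := by
    rw [tsum_eq_sum (s := K)]
    · refine Finset.sum_congr rfl (fun y hy => ?_)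
      rw [Set.indicator_of_mem (by exact hy), mul_one]
    · intro y hy
      rw [Set.indicator_of_notMem (by exact hy), mul_zero]
  linarith

theorem GG_energy_bdd {H : Finset ↥Ftil} {m : ↥Ftil → ℝ} (hm : ∀ h ∈ H, 0 < m h)
    (hs : ∑ h ∈ H, m h = 1) (hgen : Subsemigroup.closure (H : Set ↥Ftil) = ⊤) (K : Finset ℝ) :
    ∃ M : ℝ, 0 ≤ M ∧ ∀ n, EE H m (GG H m K n) ≤ M := by
  choose C pC hC using point_bound hm hgen
  set c : ℝ := (K.card : ℝ) * ∑ x ∈ K, C x with hc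
  have pc : 0 ≤ c := mul_nonneg (by positivity) (Finset.sum_nonneg (fun x _ => pC x))
  refine ⟨4 * c, by positivity, fun n => ?_⟩
  set S := ∑ y ∈ K, GG H m K n y with hS
  have h1 := GG_energy hm hs K n
  rw [← hS] at h1
  have h2 : S ^ 2 ≤ K.card * ∑ y ∈ K, GG H m K n y ^ 2 := sq_sum_le_card_mul_sum_sq
  have h3 : ∑ y ∈ K, GG H m K n y ^ 2 ≤ (∑ x ∈ K, C x) * EE H m (GG H m K n) := by
    rw [Finset.sum_mul]
    exact Finset.sum_le_sum (fun x _ => hC x _ (GG_supp H m K n))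
  have h4 : S ^ 2 ≤ c * EE H m (GG H m K n) := by
    refine h2.trans ?_
    rw [hc, mul_assoc]
    exact mul_le_mul_of_nonneg_left h3 (by positivity)
  have pS : 0 ≤ S := Finset.sum_nonneg (fun y _ => GG_nonneg hm K n y)
  have h5 : S ^ 2 ≤ 2 * c * S := by
    have := mul_le_mul_of_nonneg_left h1 pc
    linarith
  have h6 : S ≤ 2 * c := by
    by_contra hcon
    push Not at hcon
    nlinarith
  linarith

/-- The limit of the truncated Green functions, small at some point `2^{-k}`. -/
theorem green {H : Finset ↥Ftil} {m : ↥Ftil → ℝ} (hm : ∀ h ∈ H, 0 < m h)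
    (hs : ∑ h ∈ H, m h = 1) (hgen : Subsemigroup.closure (H : Set ↥Ftil) = ⊤) (K : Finset ℝ) :
    ∃ U : ℝ → ℝ, (∀ n y, GG H m K n y ≤ U y) ∧ ∃ k : ℕ, U ((1/2) ^ k) ≤ 1/4 := by
  obtain ⟨M, pM, hM⟩ := GG_energy_bdd hm hs hgen K
  have hmono : ∀ y, Monotone (fun n => GG H m K n y) :=
    fun y => monotone_nat_of_le_succ (fun n => GG_mono hm K n y)
  have hb : ∀ y, BddAbove (Set.range (fun n => GG H m K n y)) := by
    intro y
    obtain ⟨C, pC, hC⟩ := point_bound hm hgen y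
    refine ⟨C * M + 1, ?_⟩
    rintro _ ⟨n, rfl⟩
    have a := hC _ (GG_supp H m K n)
    have b := mul_le_mul_of_nonneg_left (hM n) pC
    dsimp only
    nlinarith [sq_nonneg (GG H m K n y - 1)]
  refine ⟨fun y => ⨆ n, GG H m K n y, fun n y => le_ciSup (hb y) n, ?_⟩
  have hlim : ∀ y, Filter.Tendsto (fun n => GG H m K n y) Filter.atTop
      (nhds (⨆ n, GG H m K n y)) := fun y => tendsto_atTop_ciSup (hmono y) (hb y)
  by_contra hcon
  push Not at hcon
  obtain ⟨C, pC, hC⟩ := interval_bound hm hgen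
  obtain ⟨N, hN⟩ := exists_nat_gt (16 * (C * M))
  set p : ℕ → ℝ := fun k => (1/2 : ℝ) ^ k with hp
  have hinj : Function.Injective p :=
    pow_right_injective₀ (by norm_num) (by norm_num)
  have h1 : ∀ n, ∑ k ∈ Finset.range N, GG H m K n (p k) ^ 2 ≤ C * M := by
    intro n
    have := hC _ (GG_supp H m K n) ((Finset.range N).map ⟨p, hinj⟩) (by
      intro y hy
      rw [Finset.mem_map] at hy
      obtain ⟨k, _, rfl⟩ := hy
      have p1 : (1/2 : ℝ) ^ k ≤ 1 := pow_le_one₀ (by norm_num) (by norm_num)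
      refine ⟨?_, ?_⟩
      · change 0 < (1/2 : ℝ) ^ k
        positivity
      · change (1/2 : ℝ) ^ k < 2
        linarith)
    rw [Finset.sum_map] at this
    exact this.trans (mul_le_mul_of_nonneg_left (hM n) pC)
  have h2 : Filter.Tendsto (fun n => ∑ k ∈ Finset.range N, GG H m K n (p k) ^ 2) Filter.atTop
      (nhds (∑ k ∈ Finset.range N, (⨆ n, GG H m K n (p k)) ^ 2)) :=
    tendsto_finsetSum _ (fun k _ => (hlim (p k)).pow 2)
  have h3 := le_of_tendsto' h2 h1
  have h4 : ∑ k ∈ Finset.range N, (1/16 : ℝ) ≤ ∑ k ∈ Finset.range N, (⨆ n, GG H m K n (p k)) ^ 2 :=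
    Finset.sum_le_sum (fun k _ => by
      have : 1/4 < ⨆ n, GG H m K n (p k) := hcon k
      nlinarith)
  rw [Finset.sum_const, Finset.card_range, nsmul_eq_mul] at h4
  linarith

open Classical in
/-- Indicator of smoothness at `v`. -/
def psi (v : ℝ) (g : ↥Ftil) : ℝ := if DifferentiableAt ℝ g.1 v then 1 else 0

theorem psi_eq (v : ℝ) (g h : ↥Ftil) (hk : g.1 v ∉ KK h.1) : psi v (h * g) = psi v g := by
  simp only [KK, Set.mem_ofPred_eq, not_not] at hk
  obtain ⟨h1, h2⟩ := hk
  have : DifferentiableAt ℝ (h * g).1 v ↔ DifferentiableAt ℝ g.1 v := by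
    constructor
    · intro hd
      have e : (g.1 : ℝ → ℝ) = (h.1⁻¹ : Equiv.Perm ℝ) ∘ ((h * g).1 : ℝ → ℝ) := by
        funext y
        simp
      rw [e]
      exact DifferentiableAt.comp v h2 hd
    · intro hd
      exact DifferentiableAt.comp (g := h.1) (f := g.1) v h1 hd
  unfold psi
  by_cases hd : DifferentiableAt ℝ g.1 v
  · rw [if_pos hd, if_pos (this.2 hd)]
  · rw [if_neg hd, if_neg (fun hc => hd (this.1 hc))]

theorem psi_mem (v : ℝ) (g : ↥Ftil) : 0 ≤ psi v g ∧ psi v g ≤ 1 := by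
  unfold psi; split_ifs <;> norm_num

/-- Iterates of the Markov operator on the group. -/
def ff (H : Finset ↥Ftil) (m : ↥Ftil → ℝ) (v : ℝ) : ℕ → ↥Ftil → ℝ
  | 0 => psi v
  | n + 1 => fun g => ∑ h ∈ H, m h * ff H m v n (h * g)

theorem ff_mem {H : Finset ↥Ftil} {m : ↥Ftil → ℝ} (hm : ∀ h ∈ H, 0 < m h)
    (hs : ∑ h ∈ H, m h = 1) (v : ℝ) (n : ℕ) : ∀ g, 0 ≤ ff H m v n g ∧ ff H m v n g ≤ 1 := by
  induction n with
  | zero => exact psi_mem v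
  | succ n ih =>
    intro g
    refine ⟨Finset.sum_nonneg (fun h hh => mul_nonneg (hm h hh).le (ih _).1), ?_⟩
    rw [← hs]
    exact Finset.sum_le_sum (fun h hh => mul_le_of_le_one_right (hm h hh).le (ih _).2)

theorem ff_step {H : Finset ↥Ftil} {m : ↥Ftil → ℝ} (hm : ∀ h ∈ H, 0 < m h)
    (hs : ∑ h ∈ H, m h = 1) (K : Finset ℝ) (hK : ∀ h ∈ H, KK h.1 ⊆ K) (v : ℝ) (n : ℕ) :
    ∀ g, |ff H m v (n + 1) g - ff H m v n g| ≤ GG H m K (n + 1) (g.1 v) - GG H m K n (g.1 v) := by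
  induction n with
  | zero =>
    intro g
    have e0 : GG H m K (0 + 1) (g.1 v) - GG H m K 0 (g.1 v)
        = Set.indicator (K : Set ℝ) (fun _ => (1:ℝ)) (g.1 v) := by
      simp [GG, QQ]
    rw [e0]
    have m1 := ff_mem hm hs v 1 g
    have m0 := ff_mem hm hs v 0 g
    by_cases hv : g.1 v ∈ (K : Set ℝ)
    · rw [Set.indicator_of_mem hv, abs_le]
      constructor <;> simp only [zero_add] <;> linarith [m1.1, m1.2, m0.1, m0.2]
    · rw [Set.indicator_of_notMem hv]
      have : ff H m v (0 + 1) g = ff H m v 0 g := by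
        change ∑ h ∈ H, m h * psi v (h * g) = psi v g
        have : ∀ h ∈ H, m h * psi v (h * g) = m h * psi v g := fun h hh => by
          rw [psi_eq v g h (fun hc => hv (hK h hh hc))]
        rw [Finset.sum_congr rfl this, ← Finset.sum_mul, hs, one_mul]
      rw [this]; simp
  | succ n ih =>
    intro g
    have e1 : ff H m v (n + 1 + 1) g - ff H m v (n + 1) g
        = ∑ h ∈ H, m h * (ff H m v (n + 1) (h * g) - ff H m v n (h * g)) := by
      simp only [mul_sub, Finset.sum_sub_distrib]
      rfl
    have e2 : GG H m K (n + 1 + 1) (g.1 v) - GG H m K (n + 1) (g.1 v)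
        = ∑ h ∈ H, m h * (GG H m K (n + 1) ((h * g).1 v) - GG H m K n ((h * g).1 v)) := by
      simp only [mul_sub, Finset.sum_sub_distrib]
      change (_ + QQ H m (GG H m K (n + 1)) (g.1 v)) - (_ + QQ H m (GG H m K n) (g.1 v)) = _
      rw [add_sub_add_left_eq_sub]
      rfl
    rw [e1, e2]
    refine (Finset.abs_sum_le_sum_abs _ _).trans (Finset.sum_le_sum (fun h hh => ?_))
    rw [abs_mul, abs_of_pos (hm h hh)]
    exact mul_le_mul_of_nonneg_left (ih (h * g)) (hm h hh).le

theorem ff_near {H : Finset ↥Ftil} {m : ↥Ftil → ℝ} (hm : ∀ h ∈ H, 0 < m h)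
    (hs : ∑ h ∈ H, m h = 1) (K : Finset ℝ) (hK : ∀ h ∈ H, KK h.1 ⊆ K) (v : ℝ) (g : ↥Ftil)
    (n : ℕ) : |ff H m v n g - psi v g| ≤ GG H m K n (g.1 v) := by
  induction n with
  | zero => simp [ff, GG]
  | succ n ih =>
    have := ff_step hm hs K hK v n g
    have := abs_sub_le (ff H m v (n + 1) g) (ff H m v n g) (psi v g)
    linarith

theorem main_aux {H : Finset ↥Ftil} {m : ↥Ftil → ℝ} (hm : ∀ h ∈ H, 0 < m h)
    (hs : ∑ h ∈ H, m h = 1) (hgen : Subsemigroup.closure (H : Set ↥Ftil) = ⊤) :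
    ∃ f : ↥Ftil → ℝ,
      (∃ c : ℝ, ∀ g, |f g| ≤ c) ∧
      (∀ g : ↥Ftil, f g = ∑ h ∈ H, m h * f (h * g)) ∧
      (∃ g₁ g₂ : ↥Ftil, f g₁ ≠ f g₂) := by
  have hfinK : (⋃ h ∈ H, KK h.1).Finite :=
    Set.Finite.biUnion H.finite_toSet (fun h _ => KK_finite h.1 h.2)
  set K : Finset ℝ := hfinK.toFinset with hKdef
  have hK : ∀ h ∈ H, KK h.1 ⊆ K := by
    intro h hh
    rw [hKdef, Set.Finite.coe_toFinset]
    exact Set.subset_biUnion_of_mem (u := fun h : ↥Ftil => KK h.1) hh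
  obtain ⟨U, hU, k, hk⟩ := green hm hs hgen K
  set v : ℝ := (1/2) ^ k with hv
  have hconv : ∀ g : ↥Ftil, ∃ l, Filter.Tendsto (fun n => ff H m v n g) Filter.atTop (nhds l) := by
    intro g
    have hG : Monotone (fun n => GG H m K n (g.1 v)) :=
      monotone_nat_of_le_succ (fun n => GG_mono hm K n _)
    have hGl := tendsto_atTop_ciSup hG ⟨U (g.1 v), by rintro _ ⟨n, rfl⟩; exact hU n _⟩
    have hS : Monotone (fun n => ff H m v n g + GG H m K n (g.1 v)) :=
      monotone_nat_of_le_succ (fun n => by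
        have := (abs_le.1 (ff_step hm hs K hK v n g)).1
        linarith)
    have hSl := tendsto_atTop_ciSup hS ⟨1 + U (g.1 v), by
      rintro _ ⟨n, rfl⟩
      exact add_le_add (ff_mem hm hs v n g).2 (hU n _)⟩
    refine ⟨_, (hSl.sub hGl).congr (fun n => by ring)⟩
  choose f hf using hconv
  have hnear : ∀ g, |f g - psi v g| ≤ U (g.1 v) := fun g =>
    le_of_tendsto' ((hf g).sub_const _).abs
      (fun n => (ff_near hm hs K hK v g n).trans (hU n _))
  refine ⟨f, ⟨1, fun g => ?_⟩, fun g => ?_, ?_⟩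
  · have a := ge_of_tendsto' (hf g) (fun n => (ff_mem hm hs v n g).1)
    have b := le_of_tendsto' (hf g) (fun n => (ff_mem hm hs v n g).2)
    rw [abs_le]; constructor <;> linarith
  · have h1 : Filter.Tendsto (fun n => ff H m v (n + 1) g) Filter.atTop (nhds (f g)) :=
      (hf g).comp (Filter.tendsto_add_atTop_nat 1)
    have h2 : Filter.Tendsto (fun n => ff H m v (n + 1) g) Filter.atTop
        (nhds (∑ h ∈ H, m h * f (h * g))) :=
      tendsto_finsetSum _ (fun h _ => (hf (h * g)).const_mul (m h))
    exact tendsto_nhds_unique h1 h2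
  · obtain ⟨e, he, he0, hek⟩ := transport k
    rw [← hv] at he0
    simp only [KK, Set.mem_ofPred_eq, not_not] at hek
    obtain ⟨d1, d2⟩ := hek
    have hB0 : Btil 0 = 0 := by rw [Btil_apply 0 le_rfl (by norm_num)]; norm_num
    have hinv : (e⁻¹ : Equiv.Perm ℝ) v = 0 := by rw [← he0]; simp
    set g' : ↥Ftil := ⟨e * Btil * e⁻¹, Ftil.mul_mem (Ftil.mul_mem he Btil_mem) (Ftil.inv_mem he)⟩
      with hg'
    have hgv : g'.1 v = v := by
      change e (Btil ((e⁻¹ : Equiv.Perm ℝ) v)) = v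
      rw [hinv, hB0, he0]
    refine ⟨1, g', ?_⟩
    have p1 : psi v 1 = 1 := by
      have : DifferentiableAt ℝ ((1 : ↥Ftil).1 : ℝ → ℝ) v := by
        change DifferentiableAt ℝ (fun x : ℝ => x) v
        fun_prop
      simp only [psi, if_pos this]
    have p2 : psi v g' = 0 := by
      have : ¬ DifferentiableAt ℝ (g'.1 : ℝ → ℝ) v := by
        intro hd
        apply Btil_not_diff
        have e1 : (Btil : ℝ → ℝ) = (e⁻¹ : Equiv.Perm ℝ) ∘ ((g'.1 : ℝ → ℝ) ∘ (e : ℝ → ℝ)) := by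
          funext y
          simp [hg']
        rw [e1]
        rw [← he0] at hd hgv
        refine DifferentiableAt.comp (0:ℝ) ?_ (DifferentiableAt.comp (0:ℝ) hd d1)
        rw [Function.comp_apply, hgv]
        exact d2
      simp only [psi, if_neg this]
    have n1 := hnear 1
    have n2 := hnear g'
    rw [hgv, p2] at n2
    rw [p1] at n1
    have : ((1 : ↥Ftil).1 : Equiv.Perm ℝ) v = v := rfl
    rw [this] at n1
    intro heq
    have a := (abs_le.1 n1).1
    have b := (abs_le.1 n2).2
    linarith

/-- Thompson's group `F` is not Liouville: for every strictly non-degenerate finitely supported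
probability measure `μ` on `F̃` there is a bounded non-constant `μ`-harmonic function.
Harmonicity `f(g) = ∑ₕ μ(h) f(g·h)` is expressed with the paper's product `g·h = h * g`. -/
theorem thompson_not_liouville (μ : PMF ↥Ftil)
    (hfin : μ.support.Finite)
    (hnondeg : Subsemigroup.closure μ.support = (⊤ : Subsemigroup ↥Ftil)) :
    ∃ f : ↥Ftil → ℝ,
      (∃ c : ℝ, ∀ g, |f g| ≤ c) ∧
      (∀ g : ↥Ftil, f g = ∑' h : ↥Ftil, (μ h).toReal * f (h * g)) ∧
      (∃ g₁ g₂ : ↥Ftil, f g₁ ≠ f g₂) := by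
  have hm : ∀ h ∈ hfin.toFinset, 0 < (μ h).toReal := by
    intro h hh
    rw [Set.Finite.mem_toFinset, PMF.mem_support_iff] at hh
    exact ENNReal.toReal_pos hh (μ.apply_ne_top h)
  have hz : ∀ h, h ∉ hfin.toFinset → μ h = 0 := by
    intro h hh
    rw [Set.Finite.mem_toFinset, PMF.mem_support_iff, not_not] at hh
    exact hh
  have hs : ∑ h ∈ hfin.toFinset, (μ h).toReal = 1 := by
    have ht : ∑' h, μ h = ∑ h ∈ hfin.toFinset, μ h := tsum_eq_sum (fun h hh => hz h hh)
    rw [← ENNReal.toReal_sum (fun h _ => μ.apply_ne_top h), ← ht,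
      μ.tsum_coe, ENNReal.toReal_one]
  have hgen : Subsemigroup.closure (hfin.toFinset : Set ↥Ftil) = ⊤ := by
    rw [Set.Finite.coe_toFinset]; exact hnondeg
  obtain ⟨f, hb, hh, hn⟩ := main_aux hm hs hgen
  refine ⟨f, hb, fun g => ?_, hn⟩
  rw [tsum_eq_sum (s := hfin.toFinset) (fun h hh => by rw [hz h hh]; simp)]
  exact hh g
end
end

section
/- Let K be a finite symmetric generating set of F̃ (K = K⁻¹ and K generates F̃ as a group), and let μ_K be the uniform probability measure on K. Then the simple random walk on the Cayley graph of F̃ determined by K is not Liouville: there exists a bounded, non-constant μ_K-harmonic function f : F̃ → ℝ. -/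
noncomputable section

open Filter Topology

/-! ### Slope jumps -/

/-- `m` is the jump of the binary logarithm of the slope of `g` at `x`. -/
def Jump (g : Equiv.Perm ℝ) (x : ℝ) (m : ℤ) : Prop :=
  ∃ a b : ℤ, m = a - b ∧ ∃ ε > 0, ∀ t : ℝ, 0 ≤ t → t ≤ ε →
    g (x + t) = g x + (2 : ℝ) ^ a * t ∧ g (x - t) = g x - (2 : ℝ) ^ b * t

lemma Jump.unique {g : Equiv.Perm ℝ} {x : ℝ} {m n : ℤ} (h1 : Jump g x m) (h2 : Jump g x n) :
    m = n := by
  obtain ⟨a, b, rfl, ε, hε, h⟩ := h1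
  obtain ⟨a', b', rfl, ε', hε', h'⟩ := h2
  have ht : 0 < min ε ε' := lt_min hε hε'
  obtain ⟨p, q⟩ := h _ ht.le (min_le_left _ _)
  obtain ⟨p', q'⟩ := h' _ ht.le (min_le_right _ _)
  have e1 : (2 : ℝ) ^ a = 2 ^ a' := mul_right_cancel₀ ht.ne' (by linarith)
  have e2 : (2 : ℝ) ^ b = 2 ^ b' := mul_right_cancel₀ ht.ne' (by linarith)
  have i := zpow_right_injective₀ (a := (2 : ℝ)) (by norm_num) (by norm_num)
  rw [i e1, i e2]

lemma Jump.comp {g h : Equiv.Perm ℝ} {x : ℝ} {m n : ℤ} (h1 : Jump g x m)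
    (h2 : Jump h (g x) n) : Jump (h * g) x (m + n) := by
  obtain ⟨a, b, rfl, ε, hε, h1⟩ := h1
  obtain ⟨a', b', rfl, ε', hε', h2⟩ := h2
  have pa : (0 : ℝ) < 2 ^ a := by positivity
  have pb : (0 : ℝ) < 2 ^ b := by positivity
  refine ⟨a + a', b + b', by ring, min ε (min (ε' / 2 ^ a) (ε' / 2 ^ b)),
    lt_min hε (lt_min (by positivity) (by positivity)), fun t ht ht' => ?_⟩
  simp only [le_min_iff] at ht'
  obtain ⟨q1, q2, q3⟩ := ht'
  rw [le_div_iff₀ pa] at q2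
  rw [le_div_iff₀ pb] at q3
  obtain ⟨r1, r2⟩ := h1 t ht q1
  have s1 := (h2 (2 ^ a * t) (by positivity) (by linarith)).1
  have s2 := (h2 (2 ^ b * t) (by positivity) (by linarith)).2
  simp only [Equiv.Perm.mul_apply, r1, r2, s1, s2]
  rw [zpow_add₀ (by norm_num), zpow_add₀ (by norm_num)]
  constructor <;> ring

lemma Jump.symm {g : Equiv.Perm ℝ} {x : ℝ} {m : ℤ} (h1 : Jump g x m) :
    Jump g⁻¹ (g x) (-m) := by
  obtain ⟨a, b, rfl, ε, hε, h1⟩ := h1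
  have pa : (0 : ℝ) < 2 ^ a := by positivity
  have pb : (0 : ℝ) < 2 ^ b := by positivity
  refine ⟨-a, -b, by ring, min (ε * 2 ^ a) (ε * 2 ^ b),
    lt_min (by positivity) (by positivity), fun t ht ht' => ?_⟩
  simp only [le_min_iff] at ht'
  obtain ⟨q2, q3⟩ := ht'
  have r1 := (h1 (t / 2 ^ a) (by positivity) (by rwa [div_le_iff₀ pa])).1
  have r2 := (h1 (t / 2 ^ b) (by positivity) (by rwa [div_le_iff₀ pb])).2
  rw [mul_div_cancel₀ _ pa.ne'] at r1
  rw [mul_div_cancel₀ _ pb.ne'] at r2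
  rw [← r1, ← r2]
  simp only [Equiv.Perm.coe_inv, Equiv.symm_apply_apply, zpow_neg]
  constructor <;> ring

lemma jump_A (x : ℝ) : Jump Atil x 0 := by
  refine ⟨0, 0, by simp, 1, one_pos, fun t _ _ => ?_⟩
  simp only [Atil, Equiv.subRight_apply, zpow_zero]
  constructor <;> ring

lemma jump_B_zero : Jump Btil 0 (-1) := by
  refine ⟨-1, 0, by simp, 1, one_pos, fun t h1 h2 => ?_⟩
  simp only [Btil, Bfun, Equiv.coe_fn_mk]
  norm_num
  constructor <;> intros <;> split_ifs <;> linarith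

lemma jump_B_two : Jump Btil 2 1 := by
  refine ⟨0, -1, by simp, 1, one_pos, fun t h1 h2 => ?_⟩
  simp only [Btil, Bfun, Equiv.coe_fn_mk]
  norm_num
  constructor <;> split_ifs <;> linarith

lemma jump_B (x : ℝ) (h0 : x ≠ 0) (h2 : x ≠ 2) : Jump Btil x 0 := by
  rcases lt_or_gt_of_ne h0 with h | h
  · refine ⟨0, 0, by simp, -x, by linarith, fun t _ _ => ?_⟩
    simp only [Btil, Bfun, Equiv.coe_fn_mk, zpow_zero]
    constructor <;> split_ifs <;> linarith
  rcases lt_or_gt_of_ne h2 with h' | h'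
  · refine ⟨-1, -1, by simp, min (x / 2) (2 - x), lt_min (by linarith) (by linarith),
      fun t _ ht => ?_⟩
    simp only [le_min_iff] at ht
    simp only [Btil, Bfun, Equiv.coe_fn_mk, zpow_neg_one]
    constructor <;> split_ifs <;> linarith
  · refine ⟨0, 0, by simp, (x - 2) / 2, by linarith, fun t _ _ => ?_⟩
    simp only [Btil, Bfun, Equiv.coe_fn_mk, zpow_zero]
    constructor <;> split_ifs <;> linarith

lemma jump_exists (g : Equiv.Perm ℝ) (hg : g ∈ Ftil) :
    ∃ S : Finset ℝ, ∀ x, (x ∉ S → Jump g x 0) ∧ ∃ m, Jump g x m := by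
  unfold Ftil at hg
  induction hg using Subgroup.closure_induction with
  | mem g hg =>
    rcases hg with rfl | rfl
    · exact ⟨∅, fun x => ⟨fun _ => jump_A x, 0, jump_A x⟩⟩
    · refine ⟨{0, 2}, fun x => ⟨fun hx => ?_, ?_⟩⟩
      · simp only [Finset.mem_insert, Finset.mem_singleton, not_or] at hx
        exact jump_B x hx.1 hx.2
      · by_cases h0 : x = 0
        · exact ⟨_, h0 ▸ jump_B_zero⟩
        by_cases h2 : x = 2
        · exact ⟨_, h2 ▸ jump_B_two⟩
        exact ⟨0, jump_B x h0 h2⟩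
  | one =>
    have : ∀ x, Jump 1 x 0 := fun x => ⟨0, 0, by simp, 1, one_pos, fun t _ _ => by simp⟩
    exact ⟨∅, fun x => ⟨fun _ => this x, 0, this x⟩⟩
  | mul h g _ _ ih ig =>
    obtain ⟨S, hS⟩ := ih
    obtain ⟨R, hR⟩ := ig
    classical
    refine ⟨R ∪ S.image (g⁻¹ : Equiv.Perm ℝ), fun x => ⟨fun hx => ?_, ?_⟩⟩
    · simp only [Finset.mem_union, Finset.mem_image, not_or, not_exists, not_and] at hx
      have := ((hR x).1 hx.1).comp ((hS (g x)).1 fun h' => hx.2 _ h' (by simp))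
      simpa using this
    · obtain ⟨m, hm⟩ := (hR x).2
      obtain ⟨n, hn⟩ := (hS (g x)).2
      exact ⟨_, hm.comp hn⟩
  | inv g _ ig =>
    obtain ⟨R, hR⟩ := ig
    classical
    refine ⟨R.image g, fun x => ⟨fun hx => ?_, ?_⟩⟩
    · have hx' : g⁻¹ x ∉ R := fun h' => hx (Finset.mem_image.2 ⟨_, h', by simp⟩)
      have := ((hR _).1 hx').symm
      simpa using this
    · obtain ⟨m, hm⟩ := (hR (g⁻¹ x)).2
      refine ⟨-m, ?_⟩
      have := hm.symm
      simpa using this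

/-! ### Dirichlet forms -/

/-- The Dirichlet form of a single permutation. -/
def Dir (g : Equiv.Perm ℝ) (v : ℝ → ℝ) : ℝ := ∑' x, (v (g x) - v x) ^ 2

lemma fs_comp {v : ℝ → ℝ} (hv : v.support.Finite) (g : Equiv.Perm ℝ) :
    (fun x => v (g x)).support.Finite :=
  hv.preimage (f := g) g.injective.injOn

lemma fs_sub {v : ℝ → ℝ} (hv : v.support.Finite) (g : Equiv.Perm ℝ) :
    (fun x => (v (g x) - v x) ^ 2).support.Finite := by
  refine ((fs_comp hv g).union hv).subset fun x hx => ?_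
  simp only [Function.mem_support, Set.mem_union] at *
  by_contra! h
  simp [h.1, h.2] at hx

lemma sm_sub {v : ℝ → ℝ} (hv : v.support.Finite) (g : Equiv.Perm ℝ) :
    Summable (fun x => (v (g x) - v x) ^ 2) :=
  summable_of_hasFiniteSupport (fs_sub hv g)

lemma Dir_nonneg (g : Equiv.Perm ℝ) (v : ℝ → ℝ) : 0 ≤ Dir g v :=
  tsum_nonneg fun _ => sq_nonneg _

lemma Dir_mul (h g : Equiv.Perm ℝ) {v : ℝ → ℝ} (hv : v.support.Finite) :
    Dir (h * g) v ≤ 2 * Dir h v + 2 * Dir g v := by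
  have e : Dir h v = ∑' x, (v (h (g x)) - v (g x)) ^ 2 :=
    (Equiv.tsum_eq g (fun x => (v (h x) - v x) ^ 2)).symm
  have s : Summable (fun x => (v (h (g x)) - v (g x)) ^ 2) :=
    (Equiv.summable_iff g (f := fun x => (v (h x) - v x) ^ 2)).2 (sm_sub hv h)
  rw [e, Dir, Dir, ← tsum_mul_left, ← tsum_mul_left,
    ← (s.mul_left 2).tsum_add ((sm_sub hv g).mul_left 2)]
  refine (sm_sub hv (h * g)).tsum_le_tsum (fun x => ?_)
    ((s.mul_left 2).add ((sm_sub hv g).mul_left 2))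
  simp only [Equiv.Perm.mul_apply]
  nlinarith [sq_nonneg ((v (h (g x)) - v (g x)) - (v (g x) - v x))]

lemma Dir_inv (g : Equiv.Perm ℝ) (v : ℝ → ℝ) : Dir g⁻¹ v = Dir g v := by
  unfold Dir
  rw [← Equiv.tsum_eq g (fun x => (v (g⁻¹ x) - v x) ^ 2)]
  refine tsum_congr fun x => ?_
  simp only [Equiv.Perm.coe_inv, Equiv.symm_apply_apply]
  ring

lemma sum_le_Dir (g : Equiv.Perm ℝ) {v : ℝ → ℝ} (hv : v.support.Finite) (y : ℕ → ℝ)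
    (hy : y.Injective) (N : ℕ) :
    |∑ k ∈ Finset.range N, (v (g (y k)) - v (y k))| ≤ √N * √(Dir g v) := by
  rw [← Real.sqrt_mul (Nat.cast_nonneg N)]
  refine Real.abs_le_sqrt (sq_sum_le_card_mul_sum_sq.trans ?_)
  rw [Finset.card_range]
  refine mul_le_mul_of_nonneg_left ?_ (Nat.cast_nonneg N)
  have := (sm_sub hv g).sum_le_tsum ((Finset.range N).map ⟨y, hy⟩) (fun _ _ => sq_nonneg _)
  rw [Finset.sum_map] at this
  exact this

/-- Averages over the levels of the binary tree. -/
def Lev (v : ℝ → ℝ) (n : ℕ) : ℝ :=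
  (1 / 2) ^ n * ∑ k ∈ Finset.range (2 ^ n), v (2 * k / 2 ^ n)

lemma Lev_step {v : ℝ → ℝ} (hv : v.support.Finite) (n : ℕ) :
    |Lev v n - Lev v (n + 1)| ≤
      (√(Dir Btil v) + √(Dir (Atil⁻¹ * Btil) v)) / 2 * (3 / 4) ^ n := by
  set y : ℕ → ℝ := fun k => 2 * k / 2 ^ n with hy
  have p2 : (0 : ℝ) < 2 ^ n := by positivity
  have hinj : y.Injective := by
    intro a b hab
    simp only [hy] at hab
    field_simp at hab
    exact_mod_cast hab
  have b1 := sum_le_Dir Btil hv y hinj (2 ^ n)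
  have b2 := sum_le_Dir (Atil⁻¹ * Btil) hv y hinj (2 ^ n)
  have hB : ∀ k ∈ Finset.range (2 ^ n), Btil (y k) = 2 * k / 2 ^ (n + 1) := by
    intro k hk
    have hk' : (k : ℝ) < 2 ^ n := by exact_mod_cast Finset.mem_range.1 hk
    have h0 : 0 ≤ y k := by simp only [hy]; positivity
    have h2 : y k ≤ 2 := by simp only [hy]; rw [div_le_iff₀ p2]; linarith
    have : Btil (y k) = y k / 2 := by
      simp only [Btil, Bfun, Equiv.coe_fn_mk]
      split_ifs <;> linarith
    rw [this, pow_succ]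
    simp only [hy]
    field_simp
  have hAB : ∀ k ∈ Finset.range (2 ^ n),
      (Atil⁻¹ * Btil) (y k) = 2 * ((2 ^ n + k : ℕ) : ℝ) / 2 ^ (n + 1) := by
    intro k hk
    rw [Equiv.Perm.mul_apply, hB k hk]
    have : ∀ z, Atil⁻¹ z = z + 1 := fun z => by
      rw [Equiv.Perm.inv_eq_iff_eq]; simp [Atil]
    rw [this, pow_succ]
    push_cast
    field_simp
    ring
  have e : Lev v n - Lev v (n + 1) = - ((1 / 2) ^ (n + 1) *
      (∑ k ∈ Finset.range (2 ^ n), (v (Btil (y k)) - v (y k)) +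
       ∑ k ∈ Finset.range (2 ^ n), (v ((Atil⁻¹ * Btil) (y k)) - v (y k)))) := by
    have : Lev v (n + 1) = (1 / 2) ^ (n + 1) * (∑ k ∈ Finset.range (2 ^ n), v (Btil (y k)) +
       ∑ k ∈ Finset.range (2 ^ n), v ((Atil⁻¹ * Btil) (y k))) := by
      rw [Lev, show 2 ^ (n + 1) = 2 ^ n + 2 ^ n by ring, Finset.sum_range_add]
      congr 2
      · exact Finset.sum_congr rfl fun k hk => by rw [hB k hk]
      · exact Finset.sum_congr rfl fun k hk => by rw [hAB k hk]
    rw [this, Lev, Finset.sum_sub_distrib, Finset.sum_sub_distrib]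
    rw [pow_succ]
    ring
  rw [e, abs_neg, abs_mul, abs_of_pos (by positivity)]
  have key : (1 / 2 : ℝ) ^ n * √((2 ^ n : ℕ) : ℝ) ≤ (3 / 4) ^ n := by
    have : √((2 ^ n : ℕ) : ℝ) ≤ (3 / 2) ^ n := by
      apply Real.sqrt_le_iff.2 ⟨by positivity, ?_⟩
      rw [← pow_mul, mul_comm n 2, pow_mul]
      push_cast
      exact pow_le_pow_left₀ (by norm_num) (by norm_num) n
    calc _ ≤ (1 / 2 : ℝ) ^ n * (3 / 2) ^ n := by gcongr
      _ = _ := by rw [← mul_pow]; norm_num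
  set R := √(Dir Btil v) + √(Dir (Atil⁻¹ * Btil) v) with hR
  have hR0 : 0 ≤ R := by positivity
  calc _ ≤ (1 / 2 : ℝ) ^ (n + 1) * (√((2 ^ n : ℕ) : ℝ) * R) := by
        refine mul_le_mul_of_nonneg_left ?_ (by positivity)
        refine (abs_add_le _ _).trans ?_
        rw [hR, mul_add]
        exact add_le_add b1 b2
    _ = R / 2 * ((1 / 2 : ℝ) ^ n * √((2 ^ n : ℕ) : ℝ)) := by rw [pow_succ]; ring
    _ ≤ _ := by gcongr

lemma Lev_tendsto {v : ℝ → ℝ} (hv : v.support.Finite) : Tendsto (Lev v) atTop (𝓝 0) := by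
  have hs : Summable (fun x => |v x|) := by
    refine summable_of_hasFiniteSupport (hv.subset fun x hx => ?_)
    simpa using hx
  have h0 : Tendsto (fun n : ℕ => (1 / 2 : ℝ) ^ n * ∑' x, |v x|) atTop (𝓝 0) := by
    simpa using (tendsto_pow_atTop_nhds_zero_of_lt_one (r := (1 / 2 : ℝ)) (by norm_num)
      (by norm_num)).mul_const (∑' x, |v x|)
  refine squeeze_zero_norm (fun n => ?_) h0
  rw [Real.norm_eq_abs, Lev, abs_mul, abs_of_pos (by positivity)]
  refine mul_le_mul_of_nonneg_left ?_ (by positivity)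
  refine (Finset.abs_sum_le_sum_abs _ _).trans ?_
  have hinj : Function.Injective (fun k : ℕ => (2 * k / 2 ^ n : ℝ)) := by
    intro a b hab
    have p2 : (0 : ℝ) < 2 ^ n := by positivity
    simp only at hab
    field_simp at hab
    exact_mod_cast hab
  have := hs.sum_le_tsum ((Finset.range (2 ^ n)).map ⟨_, hinj⟩) (fun _ _ => abs_nonneg _)
  simpa [Finset.sum_map] using this

lemma root_bound {v : ℝ → ℝ} (hv : v.support.Finite) :
    v 0 ^ 2 ≤ 8 * (Dir Btil v + Dir (Atil⁻¹ * Btil) v) := by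
  have h := dist_le_of_le_geometric_of_tendsto₀ (3 / 4 : ℝ)
    ((√(Dir Btil v) + √(Dir (Atil⁻¹ * Btil) v)) / 2) (by norm_num)
    (fun n => by rw [Real.dist_eq]; exact Lev_step hv n) (Lev_tendsto hv)
  have e : Lev v 0 = v 0 := by simp [Lev]
  rw [Real.dist_eq, e, sub_zero] at h
  have s1 := Real.sq_sqrt (Dir_nonneg Btil v)
  have s2 := Real.sq_sqrt (Dir_nonneg (Atil⁻¹ * Btil) v)
  set p := √(Dir Btil v)
  set q := √(Dir (Atil⁻¹ * Btil) v)
  rw [← s1, ← s2]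
  have h' : |v 0| ≤ 2 * (p + q) := h.trans (le_of_eq (by ring))
  have := pow_le_pow_left₀ (abs_nonneg _) h' 2
  rw [sq_abs] at this
  nlinarith [sq_nonneg (p - q)]

/-! ### The walk on the line -/

section walk
variable (K : Finset ↥Ftil)

/-- Total energy. -/
def En (v : ℝ → ℝ) : ℝ := ∑ h ∈ K, Dir h v

/-- Markov operator on functions on the line. -/
def TT (v : ℝ → ℝ) : ℝ → ℝ := fun x => (K.card : ℝ)⁻¹ * ∑ h ∈ K, v ((h : Equiv.Perm ℝ) x)

lemma En_nonneg (v : ℝ → ℝ) : 0 ≤ En K v := Finset.sum_nonneg fun _ _ => Dir_nonneg _ _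

lemma Dir_le_En (hgen : Subgroup.closure (K : Set ↥Ftil) = (⊤ : Subgroup ↥Ftil)) (g : ↥Ftil) :
    ∃ C : ℝ, 0 ≤ C ∧ ∀ v : ℝ → ℝ, v.support.Finite → Dir g v ≤ C * En K v := by
  have hg : g ∈ Subgroup.closure (K : Set ↥Ftil) := by rw [hgen]; trivial
  induction hg using Subgroup.closure_induction with
  | mem g hg =>
    refine ⟨1, zero_le_one, fun v _ => ?_⟩
    rw [one_mul]
    exact Finset.single_le_sum (f := fun h : ↥Ftil => Dir h v) (fun _ _ => Dir_nonneg _ _) hg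
  | one => exact ⟨0, le_rfl, fun v _ => by simp [Dir]⟩
  | mul h g _ _ ih ig =>
    obtain ⟨C, hC, h1⟩ := ih
    obtain ⟨C', hC', h2⟩ := ig
    refine ⟨2 * C + 2 * C', by positivity, fun v hv => ?_⟩
    have := Dir_mul (h : Equiv.Perm ℝ) g hv
    rw [Subgroup.coe_mul]
    linarith [h1 v hv, h2 v hv]
  | inv g _ ig =>
    obtain ⟨C, hC, h1⟩ := ig
    refine ⟨C, hC, fun v hv => ?_⟩
    rw [Subgroup.coe_inv, Dir_inv]
    exact h1 v hv

lemma pt_bound (hgen : Subgroup.closure (K : Set ↥Ftil) = (⊤ : Subgroup ↥Ftil)) (g : ↥Ftil) :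
    ∃ C : ℝ, 0 ≤ C ∧ ∀ v : ℝ → ℝ, v.support.Finite →
      v ((g : Equiv.Perm ℝ) 0) ^ 2 ≤ C * En K v := by
  have hA : Atil ∈ Ftil := Subgroup.subset_closure (by simp)
  have hB : Btil ∈ Ftil := Subgroup.subset_closure (by simp)
  obtain ⟨C, hC, h⟩ := Dir_le_En K hgen g
  obtain ⟨C1, hC1, h1⟩ := Dir_le_En K hgen ⟨Btil, hB⟩
  obtain ⟨C2, hC2, h2⟩ := Dir_le_En K hgen ⟨Atil⁻¹ * Btil, mul_mem (inv_mem hA) hB⟩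
  refine ⟨2 * C + 16 * (C1 + C2), by positivity, fun v hv => ?_⟩
  have r := root_bound hv
  have d : (v ((g : Equiv.Perm ℝ) 0) - v 0) ^ 2 ≤ Dir g v :=
    (sm_sub hv g).le_tsum 0 (fun _ _ => sq_nonneg _)
  have := h v hv
  have := h1 v hv
  have := h2 v hv
  simp only at *
  nlinarith [sq_nonneg ((v ((g : Equiv.Perm ℝ) 0) - v 0) - v 0)]

lemma TT_fs {v : ℝ → ℝ} (hv : v.support.Finite) : (TT K v).support.Finite := by
  have : (⋃ h ∈ K, (fun x => v ((h : Equiv.Perm ℝ) x)).support).Finite :=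
    K.finite_toSet.biUnion fun h _ => fs_comp hv h
  refine this.subset fun x hx => ?_
  simp only [Set.mem_iUnion, Function.mem_support, exists_prop]
  by_contra! hcon
  apply hx
  simp only [TT]
  rw [Finset.sum_eq_zero hcon, mul_zero]

lemma TT_nonneg {v : ℝ → ℝ} (hv : ∀ x, 0 ≤ v x) (x : ℝ) : 0 ≤ TT K v x :=
  mul_nonneg (by positivity) (Finset.sum_nonneg fun _ _ => hv _)

lemma TT_iter_fs {v : ℝ → ℝ} (hv : v.support.Finite) (n : ℕ) :
    ((TT K)^[n] v).support.Finite := by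
  induction n with
  | zero => exact hv
  | succ n ih => rw [Function.iterate_succ_apply']; exact TT_fs K ih

lemma TT_iter_nonneg {v : ℝ → ℝ} (hv : ∀ x, 0 ≤ v x) (n : ℕ) :
    ∀ x, 0 ≤ (TT K)^[n] v x := by
  induction n with
  | zero => exact hv
  | succ n ih => rw [Function.iterate_succ_apply']; exact TT_nonneg K ih

lemma TT_sum {ι : Type*} (s : Finset ι) (v : ι → ℝ → ℝ) (x : ℝ) :
    TT K (fun y => ∑ i ∈ s, v i y) x = ∑ i ∈ s, TT K (v i) x := by
  simp only [TT]
  rw [Finset.sum_comm, Finset.mul_sum]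

lemma TT_iter_sum {ι : Type*} (s : Finset ι) (v : ι → ℝ → ℝ) (n : ℕ) (x : ℝ) :
    (TT K)^[n] (fun y => ∑ i ∈ s, v i y) x = ∑ i ∈ s, (TT K)^[n] (v i) x := by
  induction n generalizing x with
  | zero => rfl
  | succ n ih =>
    simp only [Function.iterate_succ_apply']
    rw [funext ih, TT_sum]

lemma En_eq (hne : K.Nonempty) {v : ℝ → ℝ} (hv : v.support.Finite) :
    En K v = 2 * K.card * ∑' x, v x * (v x - TT K v x) := by
  have hk : (K.card : ℝ) ≠ 0 := by exact_mod_cast hne.card_pos.ne'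
  have s0 : Summable (fun x => v x ^ 2) :=
    summable_of_hasFiniteSupport (hv.subset fun x hx => by
      simp only [Function.mem_support] at *; intro h; simp [h] at hx)
  have s1 : ∀ w : ℝ → ℝ, Summable (fun x => v x * w x) := fun w =>
    summable_of_hasFiniteSupport (hv.subset fun x hx => by
      simp only [Function.mem_support] at *; intro h; simp [h] at hx)
  have hD : ∀ h : Equiv.Perm ℝ, Dir h v = ∑' x, v x * (2 * v x - 2 * v (h x)) := by
    intro h
    have s2 : Summable (fun x => v (h x) ^ 2) :=
      (Equiv.summable_iff h (f := fun x => v x ^ 2)).2 s0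
    have e2 : ∑' x, v (h x) ^ 2 = ∑' x, v x ^ 2 := Equiv.tsum_eq h (fun x => v x ^ 2)
    have : Dir h v = ∑' x, ((v (h x) ^ 2 - v x ^ 2) + v x * (2 * v x - 2 * v (h x))) :=
      tsum_congr fun x => by ring
    rw [this, (s2.sub s0).tsum_add (s1 _), s2.tsum_sub s0, e2, sub_self, zero_add]
  unfold En
  simp only [hD]
  rw [← Summable.tsum_finsetSum fun h _ => s1 _, ← tsum_mul_left]
  refine tsum_congr fun x => ?_
  rw [← Finset.mul_sum, Finset.sum_sub_distrib, ← Finset.mul_sum]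
  simp only [TT, Finset.sum_const, nsmul_eq_mul]
  field_simp
  rw [← Finset.mul_sum]
  ring

/-- Transience. -/
lemma green_summable (hne : K.Nonempty)
    (hgen : Subgroup.closure (K : Set ↥Ftil) = (⊤ : Subgroup ↥Ftil)) (a b : ↥Ftil) :
    Summable (fun n => (TT K)^[n] (Pi.single ((a : Equiv.Perm ℝ) 0) (1 : ℝ))
      ((b : Equiv.Perm ℝ) 0)) := by
  set s := (a : Equiv.Perm ℝ) 0
  set δ : ℝ → ℝ := Pi.single s (1 : ℝ) with hδ
  have hδf : δ.support.Finite := (Set.finite_singleton s).subset Pi.support_single_subset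
  have hδ0 : ∀ x, 0 ≤ δ x := fun x => by
    by_cases h : x = s
    · subst h; simp [hδ]
    · simp [hδ, h]
  have hk : (0 : ℝ) < K.card := by exact_mod_cast hne.card_pos
  obtain ⟨C, hC, h1⟩ := pt_bound K hgen a
  obtain ⟨C', hC', h2⟩ := pt_bound K hgen b
  refine summable_of_sum_range_le (c := √(C' * (2 * K.card * (2 * K.card * C))))
    (fun n => TT_iter_nonneg K hδ0 n _) fun N => ?_
  set v : ℝ → ℝ := fun x => ∑ n ∈ Finset.range N, (TT K)^[n] δ x with hvdef
  have hv : v.support.Finite := by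
    refine ((Finset.range N).finite_toSet.biUnion
      fun n _ => TT_iter_fs K hδf n).subset fun x hx => ?_
    simp only [Set.mem_iUnion, Function.mem_support, exists_prop]
    by_contra! hcon
    exact hx (Finset.sum_eq_zero hcon)
  have hv0 : ∀ x, 0 ≤ v x := fun x => Finset.sum_nonneg fun n _ => TT_iter_nonneg K hδ0 n x
  have hT : ∀ x, v x - TT K v x = δ x - (TT K)^[N] δ x := by
    intro x
    rw [hvdef, TT_sum, ← Finset.sum_sub_distrib]
    have := Finset.sum_range_sub' (fun n => (TT K)^[n] δ x) N
    simp only [Function.iterate_succ_apply'] at this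
    simpa using this
  have hE : En K v ≤ 2 * K.card * v s := by
    rw [En_eq K hne hv]
    refine mul_le_mul_of_nonneg_left ?_ (by positivity)
    have s1 : ∀ w : ℝ → ℝ, Summable (fun x => v x * w x) := fun w =>
      summable_of_hasFiniteSupport (hv.subset fun x hx => by
        simp only [Function.mem_support] at *; intro h; simp [h] at hx)
    have e : ∑' x, v x * δ x = v s := by
      rw [tsum_eq_single s fun x hx => by simp [hδ, hx]]
      simp [hδ]
    rw [← e]
    refine (s1 (fun x => v x - TT K v x)).tsum_le_tsum (fun x => ?_) (s1 δ)
    refine mul_le_mul_of_nonneg_left ?_ (hv0 x)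
    rw [hT]
    linarith [TT_iter_nonneg K hδ0 N x]
  have b1 := h1 v hv
  have hvs : v s ≤ 2 * K.card * C := by
    rcases (hv0 s).eq_or_lt with h | h
    · exact h.symm.le.trans (mul_nonneg (mul_nonneg zero_le_two hk.le) hC)
    · have : v s * v s ≤ (2 * K.card * C) * v s := by
        have := mul_le_mul_of_nonneg_left hE hC
        nlinarith
      exact le_of_mul_le_mul_right this h
  refine (le_abs_self _).trans (Real.abs_le_sqrt ((h2 v hv).trans ?_))
  refine mul_le_mul_of_nonneg_left (hE.trans ?_) hC'
  exact mul_le_mul_of_nonneg_left hvs (by positivity)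

/-- Markov operator on functions on the group. -/
def PP (f : ↥Ftil → ℝ) : ↥Ftil → ℝ := fun g => (K.card : ℝ)⁻¹ * ∑ h ∈ K, f (h * g)

lemma PP_abs_le {f : ↥Ftil → ℝ} {w : ℝ → ℝ}
    (h : ∀ g : ↥Ftil, |f g| ≤ w ((g : Equiv.Perm ℝ) 0)) (g : ↥Ftil) :
    |PP K f g| ≤ TT K w ((g : Equiv.Perm ℝ) 0) := by
  simp only [PP, TT]
  rw [abs_mul, abs_of_nonneg (by positivity : (0 : ℝ) ≤ (K.card : ℝ)⁻¹)]
  refine mul_le_mul_of_nonneg_left ?_ (by positivity)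
  exact (Finset.abs_sum_le_sum_abs _ _).trans (Finset.sum_le_sum fun k _ => h (k * g))

lemma PP_iter_diff {u : ↥Ftil → ℝ} {w : ℝ → ℝ}
    (h : ∀ g : ↥Ftil, |u g - PP K u g| ≤ w ((g : Equiv.Perm ℝ) 0)) (n : ℕ) (g : ↥Ftil) :
    |(PP K)^[n] u g - (PP K)^[n + 1] u g| ≤ (TT K)^[n] w ((g : Equiv.Perm ℝ) 0) := by
  induction n generalizing g with
  | zero => exact h g
  | succ n ih =>
    have := PP_abs_le K (f := fun g => (PP K)^[n] u g - (PP K)^[n + 1] u g) ih g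
    have e : PP K (fun g => (PP K)^[n] u g - (PP K)^[n + 1] u g) g =
        (PP K)^[n + 1] u g - (PP K)^[n + 1 + 1] u g := by
      rw [Function.iterate_succ_apply' _ n, Function.iterate_succ_apply' _ (n + 1),
        Function.iterate_succ_apply' _ n]
      simp only [PP]
      rw [Finset.sum_sub_distrib, mul_sub]
    rw [e] at this
    rwa [Function.iterate_succ_apply' (TT K)]

lemma PP_iter_bound (hne : K.Nonempty) {u : ↥Ftil → ℝ} (hu : ∀ g, |u g| ≤ 1) (n : ℕ) :
    ∀ g, |(PP K)^[n] u g| ≤ 1 := by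
  have hk : (K.card : ℝ) ≠ 0 := by exact_mod_cast hne.card_pos.ne'
  induction n with
  | zero => exact hu
  | succ n ih =>
    intro g
    rw [Function.iterate_succ_apply']
    have := PP_abs_le K (w := fun _ => 1) ih g
    simpa [TT, hk] using this

end walk

/-- The simple random walk on the Cayley graph of Thompson's group `F̃` determined by any finite
symmetric generating set `K` is not Liouville: there is a bounded non-constant `μ_K`-harmonic
function, where `μ_K` is the uniform measure on `K`.  Harmonicity `f(g) = ∑_{h∈K} |K|⁻¹ f(g·h)`
is expressed with the paper's product `g·h = h * g`. -/
theorem thompson_simple_random_walk_not_liouville (K : Finset ↥Ftil)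
    (hne : K.Nonempty)
    (hsym : ∀ g ∈ K, g⁻¹ ∈ K)
    (hgen : Subgroup.closure (K : Set ↥Ftil) = (⊤ : Subgroup ↥Ftil)) :
    ∃ f : ↥Ftil → ℝ,
      (∃ c : ℝ, ∀ g, |f g| ≤ c) ∧
      (∀ g : ↥Ftil, f g = (K.card : ℝ)⁻¹ * ∑ h ∈ K, f (h * g)) ∧
      (∃ g₁ g₂ : ↥Ftil, f g₁ ≠ f g₂) := by
  classical
  have hk : (0 : ℝ) < K.card := by exact_mod_cast hne.card_pos
  choose S hS using fun g : ↥Ftil => jump_exists g g.2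
  choose J hJ using fun (g : ↥Ftil) => (hS g 0).2
  -- the finite set of breakpoints in the orbit
  set R : Finset ℝ := (K.biUnion S).filter (fun x => ∃ g : ↥Ftil, (g : Equiv.Perm ℝ) 0 = x)
    with hR
  set w : ℝ → ℝ := fun y => ∑ s ∈ R, (Pi.single s (1 : ℝ) : ℝ → ℝ) y with hw
  have hw1 : ∀ y ∈ R, w y = 1 := fun y hy => by
    simp [hw, Pi.single_apply, hy]
  have hw0 : ∀ y, 0 ≤ w y := fun y => by
    simp only [hw, Pi.single_apply]
    exact Finset.sum_nonneg fun _ _ => by split_ifs <;> norm_num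
  have hsum : ∀ g : ↥Ftil, Summable (fun n => (TT K)^[n] w ((g : Equiv.Perm ℝ) 0)) := by
    intro g
    simp only [hw, TT_iter_sum]
    refine summable_sum fun s hs => ?_
    obtain ⟨a, rfl⟩ := (Finset.mem_filter.1 hs).2
    exact green_summable K hne hgen a g
  -- a point where the Green potential is small
  obtain ⟨g₀, hg₀⟩ : ∃ g : ↥Ftil, ∑' n, (TT K)^[n] w ((g : Equiv.Perm ℝ) 0) < 1 / 2 := by
    by_contra! hcon
    have step : ∀ m : ℕ, ∀ g : ↥Ftil,
        1 / 2 ≤ ∑' n, (TT K)^[n + m] w ((g : Equiv.Perm ℝ) 0) := by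
      intro m
      induction m with
      | zero => exact hcon
      | succ m ih =>
        intro g
        have e : ∑' n, (TT K)^[n + (m + 1)] w ((g : Equiv.Perm ℝ) 0) =
            (K.card : ℝ)⁻¹ * ∑ h ∈ K,
              ∑' n, (TT K)^[n + m] w (((h * g : ↥Ftil) : Equiv.Perm ℝ) 0) := by
          rw [← Summable.tsum_finsetSum fun h _ => (summable_nat_add_iff m).2 (hsum (h * g)),
            ← tsum_mul_left]
          refine tsum_congr fun n => ?_
          rw [← add_assoc, Function.iterate_succ_apply']
          rfl
        rw [e]
        calc (1 / 2 : ℝ) = (K.card : ℝ)⁻¹ * ∑ h ∈ K, (1 / 2 : ℝ) := by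
              rw [Finset.sum_const, nsmul_eq_mul]; field_simp
          _ ≤ _ := by
              refine mul_le_mul_of_nonneg_left ?_ (by positivity)
              exact Finset.sum_le_sum fun h _ => ih (h * g)
    have lim := tendsto_sum_nat_add (fun n => (TT K)^[n] w (((1 : ↥Ftil) : Equiv.Perm ℝ) 0))
    have := ge_of_tendsto' lim (fun m => step m 1)
    norm_num at this
  -- the initial function
  set u : ↥Ftil → ℝ := fun g => if J g = J g₀ then 1 else 0 with hu
  have hub : ∀ g, |u g| ≤ 1 := fun g => by
    simp only [hu]; split_ifs <;> simp
  have hstep : ∀ g : ↥Ftil, |u g - PP K u g| ≤ w ((g : Equiv.Perm ℝ) 0) := by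
    intro g
    by_cases hg : (g : Equiv.Perm ℝ) 0 ∈ R
    · rw [hw1 _ hg]
      have h0 : ∀ g, 0 ≤ u g ∧ u g ≤ 1 := fun g => by
        simp only [hu]; split_ifs <;> norm_num
      have h2 : 0 ≤ PP K u g := mul_nonneg (by positivity)
        (Finset.sum_nonneg fun h _ => (h0 _).1)
      have h3 : PP K u g ≤ 1 := by
        have := PP_iter_bound K hne hub 1 g
        exact (le_abs_self _).trans this
      rw [abs_le]
      constructor <;> linarith [(h0 g).1, (h0 g).2]
    · have : ∀ h ∈ K, u (h * g) = u g := by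
        intro h hh
        have hn : (g : Equiv.Perm ℝ) 0 ∉ S h := fun hmem =>
          hg (Finset.mem_filter.2 ⟨Finset.mem_biUnion.2 ⟨h, hh, hmem⟩, g, rfl⟩)
        have j := (hJ g).comp ((hS h _).1 hn)
        have : J (h * g) = J g + 0 := (hJ (h * g)).unique j
        simp only [hu, this, add_zero]
      have e : PP K u g = u g := by
        simp only [PP]
        rw [Finset.sum_congr rfl this, Finset.sum_const, nsmul_eq_mul]
        field_simp
      rw [e, sub_self, abs_zero]
      exact hw0 _
  have hdist : ∀ g n, dist ((PP K)^[n] u g) ((PP K)^[n + 1] u g) ≤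
      (TT K)^[n] w ((g : Equiv.Perm ℝ) 0) := fun g n => by
    rw [Real.dist_eq]; exact PP_iter_diff K hstep n g
  choose f hf using fun g : ↥Ftil =>
    cauchySeq_tendsto_of_complete (cauchySeq_of_dist_le_of_summable _ (hdist g) (hsum g))
  have hclose : ∀ g : ↥Ftil, |u g - f g| ≤ ∑' n, (TT K)^[n] w ((g : Equiv.Perm ℝ) 0) := by
    intro g
    have := dist_le_tsum_of_dist_le_of_tendsto₀ _ (hdist g) (hsum g) (hf g)
    rwa [Real.dist_eq] at this
  refine ⟨f, ⟨1, fun g => ?_⟩, fun g => ?_, g₀, g₀ * ⟨Btil, Subgroup.subset_closure (by simp)⟩, ?_⟩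
  · exact le_of_tendsto' (hf g).abs fun n => PP_iter_bound K hne hub n g
  · refine tendsto_nhds_unique ((tendsto_add_atTop_iff_nat 1).2 (hf g)) ?_
    simp only [Function.iterate_succ_apply']
    exact (tendsto_finsetSum K fun h _ => hf (h * g)).const_mul _
  · set b : ↥Ftil := ⟨Btil, Subgroup.subset_closure (by simp)⟩ with hb
    have hB0 : Btil 0 = 0 := by simp [Btil, Bfun]
    have hpt : ((g₀ * b : ↥Ftil) : Equiv.Perm ℝ) 0 = (g₀ : Equiv.Perm ℝ) 0 := by
      simp [hb, hB0]
    have hjb : J (g₀ * b) = -1 + J g₀ := by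
      refine (hJ (g₀ * b)).unique ?_
      refine Jump.comp (g := Btil) jump_B_zero ?_
      rw [hB0]
      exact hJ g₀
    have c1 := hclose g₀
    have c2 := hclose (g₀ * b)
    rw [hpt] at c2
    have u1 : u g₀ = 1 := by simp [hu]
    have u2 : u (g₀ * b) = 0 := by simp [hu, hjb]
    rw [u1] at c1
    rw [u2] at c2
    intro heq
    rw [← heq] at c2
    have d1 := (abs_le.1 c1).2
    have d2 := (abs_le.1 c2).1
    linarith
end
end

section
/- For every g ∈ F̃ there exist unique integers C₋(g), C₊(g) and a real number M > 0 such that g(γ) = γ + C₋(g) for all γ < −M and g(γ) = γ + C₊(g) for all γ > M. Moreover, the resulting maps C₋ : F̃ → ℤ and C₊ : F̃ → ℤ are group homomorphisms (C₋(g₁g₂) = C₋(g₁) + C₋(g₂) and C₊(g₁g₂) = C₊(g₁) + C₊(g₂)). -/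
noncomputable section

/-- `translationConsts g cm cp` says that `g` acts as the translation by the integer `cm`
near `-∞` and by the integer `cp` near `+∞`. -/
def translationConsts (g : ℝ → ℝ) (cm cp : ℤ) : Prop :=
  ∃ M : ℝ, 0 < M ∧ (∀ γ : ℝ, γ < -M → g γ = γ + cm) ∧ (∀ γ : ℝ, M < γ → g γ = γ + cp)

theorem tc_comp {f g : ℝ → ℝ} {a b c d : ℤ} (hf : translationConsts f a b)
    (hg : translationConsts g c d) : translationConsts (fun x => g (f x)) (a + c) (b + d) := by
  obtain ⟨M, hM, h1, h2⟩ := hf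
  obtain ⟨N, hN, h3, h4⟩ := hg
  have ha := abs_nonneg (a : ℝ)
  have hb := abs_nonneg (b : ℝ)
  have ha1 := le_abs_self (a : ℝ)
  have hb1 := neg_abs_le (b : ℝ)
  refine ⟨M + N + |(a : ℝ)| + |(b : ℝ)|, by linarith, fun x hx => ?_, fun x hx => ?_⟩
  · show g (f x) = _
    rw [h1 x (by linarith), h3 _ (by linarith)]
    push_cast; ring
  · show g (f x) = _
    rw [h2 x (by linarith), h4 _ (by linarith)]
    push_cast; ring

theorem tc_inv {g : Equiv.Perm ℝ} {a b : ℤ} (hg : translationConsts (⇑g) a b) :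
    translationConsts (⇑(g⁻¹)) (-a) (-b) := by
  obtain ⟨M, hM, h1, h2⟩ := hg
  have ha := abs_nonneg (a : ℝ)
  have hb := abs_nonneg (b : ℝ)
  have ha1 := neg_abs_le (a : ℝ)
  have hb1 := le_abs_self (b : ℝ)
  refine ⟨M + |(a : ℝ)| + |(b : ℝ)|, by linarith, fun x hx => ?_, fun x hx => ?_⟩
  · rw [Equiv.Perm.inv_eq_iff_eq]
    push_cast
    rw [h1 _ (by linarith)]
    ring
  · rw [Equiv.Perm.inv_eq_iff_eq]
    push_cast
    rw [h2 _ (by linarith)]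
    ring

theorem tc_unique {g : ℝ → ℝ} {a b c d : ℤ} (h : translationConsts g a b)
    (h' : translationConsts g c d) : a = c ∧ b = d := by
  obtain ⟨M, hM, h1, h2⟩ := h
  obtain ⟨N, hN, h3, h4⟩ := h'
  have e1 := h1 (-(M + N + 1)) (by linarith)
  have e2 := h2 (M + N + 1) (by linarith)
  rw [h3 _ (by linarith)] at e1
  rw [h4 _ (by linarith)] at e2
  constructor
  · have : (a : ℝ) = c := by linarith
    exact_mod_cast this
  · have : (b : ℝ) = d := by linarith
    exact_mod_cast this

theorem tc_exists (g : Equiv.Perm ℝ) (hg : g ∈ Ftil) :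
    ∃ c : ℤ × ℤ, translationConsts (⇑g) c.1 c.2 := by
  unfold Ftil at hg
  induction hg using Subgroup.closure_induction with
  | mem x hx =>
    rcases hx with rfl | hx
    · refine ⟨(-1, -1), 1, one_pos, fun x _ => ?_, fun x _ => ?_⟩ <;>
        simp [Atil, sub_eq_add_neg]
    · rw [Set.mem_singleton_iff] at hx
      subst hx
      refine ⟨(0, -1), 2, two_pos, fun x hx => ?_, fun x hx => ?_⟩
      · show Bfun x = _
        simp only [Bfun]
        rw [if_pos (by linarith)]
        simp
      · show Bfun x = _
        simp only [Bfun]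
        rw [if_neg (by linarith), if_neg (by linarith)]
        push_cast; ring
  | one => exact ⟨(0, 0), 1, one_pos, by simp, by simp⟩
  | mul x y _ _ hx hy =>
    obtain ⟨c, hc⟩ := hx
    obtain ⟨d, hd⟩ := hy
    exact ⟨(d.1 + c.1, d.2 + c.2), tc_comp (f := ⇑y) (g := ⇑x) hd hc⟩
  | inv x _ hx =>
    obtain ⟨c, hc⟩ := hx
    exact ⟨(-c.1, -c.2), tc_inv hc⟩

/-- Every `g ∈ F̃` is eventually a translation by unique integers `C₋(g)` (near `-∞`) and
`C₊(g)` (near `+∞`); moreover `C₋` and `C₊` are additive along the group operation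
`(g₁ g₂)(γ) = g₂(g₁(γ))` of `F̃`, i.e. they are homomorphisms `F̃ → ℤ`. -/
theorem translation_constants_exist_unique_and_additive :
    (∀ g : Equiv.Perm ℝ, g ∈ Ftil → ∃! c : ℤ × ℤ, translationConsts (⇑g) c.1 c.2) ∧
    (∀ g₁ g₂ : Equiv.Perm ℝ, g₁ ∈ Ftil → g₂ ∈ Ftil →
      ∀ cm₁ cp₁ cm₂ cp₂ : ℤ,
        translationConsts (⇑g₁) cm₁ cp₁ → translationConsts (⇑g₂) cm₂ cp₂ →
        translationConsts (fun γ => g₂ (g₁ γ)) (cm₁ + cm₂) (cp₁ + cp₂)) := by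
  refine ⟨fun g hg => ?_, fun g₁ g₂ _ _ _ _ _ _ h₁ h₂ => tc_comp h₁ h₂⟩
  obtain ⟨c, hc⟩ := tc_exists g hg
  refine ⟨c, hc, fun d hd => ?_⟩
  obtain ⟨h1, h2⟩ := tc_unique hd hc
  exact Prod.ext h1 h2
end
end

section
/- 2-adic coding of skeleton geodesics: let ε : ℕ → {0,1} and define a sequence of rationals by γ₁ = 1/2 and γ_{n+1} = γ_n/2 + ε_n/2 for n ≥ 1. Then padicNorm 2 (γ_n) = 2^n for every n ≥ 1, and the sequence of rational numbers 2^n·γ_n, viewed in the field ℚ₂ of 2-adic numbers, converges to the 2-adic integer x = 1 + ∑_{n=1}^∞ ε_n·2^n, which has 2-adic norm ‖x‖ = 1. -/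
open Filter

/-- 2-adic coding of skeleton geodesics: if `γ₁ = 1/2` and `γ_{n+1} = γ_n/2 + ε_n/2` for a
sequence of digits `ε_n ∈ {0,1}` (n ≥ 1), then `|γ_n|₂ = 2ⁿ` for all `n ≥ 1`, and in `ℚ₂`
the sequence `2ⁿ·γ_n` converges to the 2-adic integer `1 + ∑_{n≥1} ε_n 2ⁿ`, which has
2-adic norm `1`. -/
theorem two_adic_coding_of_skeleton_geodesics
    (ε : ℕ → ℚ) (hε : ∀ n, ε n = 0 ∨ ε n = 1)
    (γ : ℕ → ℚ) (hγ₁ : γ 1 = 1 / 2)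
    (hrec : ∀ n, 1 ≤ n → γ (n + 1) = γ n / 2 + ε n / 2) :
    (∀ n, 1 ≤ n → padicNorm 2 (γ n) = 2 ^ n) ∧
    ∃ x : ℚ_[2],
      Tendsto (fun n : ℕ => ((2 ^ n * γ n : ℚ) : ℚ_[2])) atTop (nhds x) ∧
      x = 1 + ∑' n : ℕ, ((ε (n + 1) : ℚ) : ℚ_[2]) * 2 ^ (n + 1) ∧
      ‖x‖ = 1 := by
  have key : ∀ n, (2:ℚ) ^ (n+1) * γ (n+1)
      = 1 + ∑ i ∈ Finset.range n, ε (i+1) * 2 ^ (i+1) := by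
    intro n
    induction n with
    | zero => simp [hγ₁]
    | succ n ih =>
      rw [Finset.sum_range_succ, ← add_assoc, ← ih, hrec (n+1) (by omega)]
      ring
  have odd : ∀ n, ∃ k : ℤ, (2:ℚ) ^ (n+1) * γ (n+1) = ((2 * k + 1 : ℤ) : ℚ) := by
    intro n
    induction n with
    | zero => exact ⟨0, by simp [hγ₁]⟩
    | succ n ih =>
      obtain ⟨k, hk⟩ := ih
      have h : (2:ℚ) ^ (n+1+1) * γ (n+1+1)
          = (2:ℚ) ^ (n+1) * γ (n+1) + 2 ^ (n+1) * ε (n+1) := by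
        rw [hrec (n+1) (by omega)]; ring
      rw [h, hk]
      rcases hε (n+1) with h0 | h0
      · exact ⟨k, by simp [h0]⟩
      · exact ⟨k + 2 ^ n, by rw [h0]; push_cast; ring⟩
  have norm1 : ∀ n, padicNorm 2 ((2:ℚ) ^ (n+1) * γ (n+1)) = 1 := by
    intro n
    obtain ⟨k, hk⟩ := odd n
    rw [hk, padicNorm.int_eq_one_iff]
    push_cast
    omega
  have hsum : Summable (fun n : ℕ => ((ε (n + 1) : ℚ) : ℚ_[2]) * 2 ^ (n + 1)) := by
    have h2 : ‖(2 : ℚ_[2])‖ = 1 / 2 := by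
      have := Padic.norm_p (p := 2)
      push_cast at this
      rw [this]; norm_num
    have hg : Summable (fun n : ℕ => ((1 / 2 : ℝ)) ^ (n + 1)) :=
      (summable_nat_add_iff 1).2 summable_geometric_two
    refine Summable.of_norm_bounded hg ?_
    intro n
    rcases hε (n+1) with h0 | h0
    · rw [h0]; simp
    · rw [h0, Rat.cast_one, one_mul, norm_pow, h2]
  have hlim : Tendsto (fun n : ℕ => ((2 ^ n * γ n : ℚ) : ℚ_[2])) atTop
      (nhds (1 + ∑' n : ℕ, ((ε (n + 1) : ℚ) : ℚ_[2]) * 2 ^ (n + 1))) := by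
    rw [← tendsto_add_atTop_iff_nat 1]
    refine (hsum.hasSum.tendsto_sum_nat.const_add 1).congr ?_
    intro n
    rw [key n]
    push_cast
    rfl
  refine ⟨?_, _, hlim, rfl, ?_⟩
  · intro n hn
    obtain ⟨m, rfl⟩ : ∃ m, n = m + 1 := ⟨n - 1, by omega⟩
    have h := norm1 m
    have hp : padicNorm 2 ((2:ℚ) ^ (m+1)) = (2 ^ (m+1))⁻¹ := by
      have h2 : padicNorm 2 (2:ℚ) = 2⁻¹ := by
        have := padicNorm.padicNorm_p (p := 2) (by norm_num)
        push_cast at this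
        exact this
      have hpow : ∀ j : ℕ, padicNorm 2 ((2:ℚ) ^ j) = (2 ^ j)⁻¹ := by
        intro j
        induction j with
        | zero => simp
        | succ j ih => rw [pow_succ, padicNorm.mul, ih, h2, mul_inv]
      exact hpow _
    rw [padicNorm.mul, hp] at h
    have h3 : ((2:ℚ) ^ (m+1)) ≠ 0 := by positivity
    field_simp at h
    exact h
  · have h := ((tendsto_add_atTop_iff_nat 1).2 hlim).norm
    refine tendsto_nhds_unique h ?_
    refine tendsto_const_nhds.congr ?_
    intro n
    rw [Padic.eq_padicNorm, norm1 n]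
    simp
end
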